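/- arXiv:0805.4309 — 4 statements merged into one kernel-verified Lean document; each statement's English description precedes it below -/
import Mathlib

section
/- For every real q > 1 there exists a constant B > 0, depending only on q, with the following property. Let λ > 0 and let f : ℝ → ℂ be a Schwartz function whose Fourier transform f̂ is supported in [−2λ, 2λ]. Then for all real numbers τ' ≤ τ'', ∫_{τ'}^{τ''} |f'(t)|² dt ≤ B λ² Σ_{ℓ ∈ ℤ} (1+|ℓ|)^{-q} ∫_{τ'+ℓ/λ}^{τ''+(ℓ+1)/λ} |f(t)|² dt. -/
open MeasureTheory Real

/-- The Fourier transform normalized as `f̂(ω) = (2π)⁻¹ ∫ f(t) e^{-iωt} dt`. -/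
noncomputable def fourierTf (f : ℝ → ℂ) (ω : ℝ) : ℂ :=
  ((2 * Real.pi)⁻¹ : ℝ) * ∫ t : ℝ, f t * Complex.exp (-(Complex.I * (ω * t)))

open scoped FourierTransform ContDiff

/-- The multiplier `2πi x χ(x)` as a Schwartz function. -/
lemma exists_multiplier : ∃ M : SchwartzMap ℝ ℂ, ∀ x : ℝ, |x| ≤ 1 → M x = 2 * π * Complex.I * x := by
  let g : ContDiffBump (0 : ℝ) := ⟨1, 2, by norm_num, by norm_num⟩
  have h1 : ContDiff ℝ ∞ (fun x : ℝ => ((g x : ℝ) : ℂ) * (2 * π * Complex.I * (x : ℂ))) := by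
    have : ContDiff ℝ ∞ (fun x : ℝ => ((g x : ℝ) : ℂ)) :=
      Complex.ofRealCLM.contDiff.comp g.contDiff
    have h3 : ContDiff ℝ ∞ (fun x : ℝ => (x : ℂ)) := Complex.ofRealCLM.contDiff
    exact this.mul (contDiff_const.mul h3)
  have h2 : HasCompactSupport (fun x : ℝ => ((g x : ℝ) : ℂ) * (2 * π * Complex.I * (x : ℂ))) := by
    apply HasCompactSupport.mul_right
    exact g.hasCompactSupport.comp_left (g := fun x : ℝ => (x : ℂ)) (by simp)
  refine ⟨h2.toSchwartzMap h1, fun x hx => ?_⟩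
  have : g x = 1 := g.one_of_mem_closedBall (by simpa [g] using hx)
  simp [this]

lemma fourier_eq_zero_of_support {lam : ℝ} (hl : 0 < lam) (f : SchwartzMap ℝ ℂ)
    (hf : Function.support (fourierTf f) ⊆ Set.Icc (-(2 * lam)) (2 * lam)) (ξ : ℝ)
    (hξ : 1 < |ξ / lam|) : 𝓕 (f : ℝ → ℂ) ξ = 0 := by
  have h0 : fourierTf f (2 * π * ξ) = 0 := by
    by_contra h
    have h1 := abs_le.2 (hf h)
    rw [abs_div, abs_of_pos hl, lt_div_iff₀ hl] at hξ
    rw [abs_mul, abs_of_pos (by positivity)] at h1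
    nlinarith [Real.pi_gt_three, abs_nonneg ξ]
  unfold fourierTf at h0
  rw [Real.fourier_real_eq_integral_exp_smul]
  have hpi : (((2 * π)⁻¹ : ℝ) : ℂ) ≠ 0 := by
    exact_mod_cast (by positivity : (2 * π)⁻¹ ≠ 0)
  rw [← (mul_eq_zero.1 h0).resolve_left hpi]
  congr 1
  ext v
  rw [smul_eq_mul, mul_comm]
  congr 2
  push_cast
  ring

lemma deriv_repr (M : SchwartzMap ℝ ℂ) (hM : ∀ x : ℝ, |x| ≤ 1 → M x = 2 * π * Complex.I * x)
    {lam : ℝ} (hl : 0 < lam) (f : SchwartzMap ℝ ℂ)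
    (hf : Function.support (fourierTf f) ⊆ Set.Icc (-(2 * lam)) (2 * lam)) (t : ℝ) :
    deriv f t = lam * ∫ v : ℝ, 𝓕 (M : ℝ → ℂ) v * f (t + v / lam) := by
  have hd : (⇑(SchwartzMap.derivCLM ℂ ℂ f) : ℝ → ℂ) = deriv f := by
    ext x; exact SchwartzMap.derivCLM_apply _ _ _
  have hdint : Integrable (deriv f) := hd ▸ (SchwartzMap.derivCLM ℂ ℂ f).integrable
  have hFd := Real.fourier_deriv f.integrable f.differentiable hdint
  have hinv : 𝓕⁻ (𝓕 (deriv f)) = deriv f := by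
    rw [← hd, ← SchwartzMap.fourier_coe, ← SchwartzMap.fourierInv_coe]
    simp
  have hint : Integrable (fun v : ℝ => f (t + v / lam)) :=
    (f.integrable.comp_add_left t).comp_div hl.ne'
  have hFh : ∀ ξ : ℝ, 𝓕 (fun v : ℝ => f (t + v / lam)) ξ
      = lam * (Complex.exp (((2 * π * (t * (lam * ξ)) : ℝ) : ℂ) * Complex.I) *
        𝓕 (f : ℝ → ℂ) (lam * ξ)) := by
    intro ξ
    rw [Real.fourier_real_eq_integral_exp_smul, Real.fourier_real_eq_integral_exp_smul]
    have e1 := Measure.integral_comp_div (fun w : ℝ =>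
      Complex.exp (((-2 * π * (lam * w) * ξ : ℝ) : ℂ) * Complex.I) • f (t + w)) lam
    have e2 := integral_add_left_eq_self (μ := volume) (fun w : ℝ =>
      Complex.exp (((-2 * π * (lam * (w - t)) * ξ : ℝ) : ℂ) * Complex.I) • f w) t
    simp only [add_sub_cancel_left] at e2
    rw [e2, abs_of_pos hl] at e1
    have e3 : ∀ v : ℝ, lam * (v / lam) = v := fun v => by field_simp
    simp only [e3] at e1
    rw [e1, ← integral_const_mul]
    rw [Complex.real_smul]
    congr 2
    ext v
    simp only [smul_eq_mul]
    rw [← mul_assoc (Complex.exp _) (Complex.exp _), ← Complex.exp_add]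
    congr 2
    push_cast
    ring
  have hmul : ∫ v : ℝ, 𝓕 (M : ℝ → ℂ) v * f (t + v / lam) =
      ∫ ξ : ℝ, M ξ * 𝓕 (fun v : ℝ => f (t + v / lam)) ξ := by
    simpa using! VectorFourier.integral_bilin_fourierIntegral_eq_flip (.mul ℂ ℂ) (L := innerₗ ℝ)
      Real.continuous_fourierChar continuous_inner M.integrable hint
  rw [hmul]
  conv_lhs => rw [← hinv, Real.fourierInv_eq', hFd]
  have e4 := Measure.integral_comp_mul_left (fun η : ℝ => M (η / lam) * (lam * 
    (Complex.exp (((2 * π * (t * η) : ℝ) : ℂ) * Complex.I) * 𝓕 (f : ℝ → ℂ) η))) lam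
  have e5 : ∀ v : ℝ, lam * v / lam = v := fun v => by field_simp
  simp only [e5] at e4
  simp only [hFh]
  rw [e4, abs_of_pos (inv_pos.2 hl), Complex.real_smul, ← mul_assoc, Complex.ofReal_inv,
    mul_inv_cancel₀ (by exact_mod_cast hl.ne'), one_mul]
  congr 1
  ext v
  by_cases hv : |v / lam| ≤ 1
  · rw [hM _ hv]
    have : (lam : ℂ) ≠ 0 := by exact_mod_cast hl.ne'
    simp only [smul_eq_mul, RCLike.inner_apply, conj_trivial]
    push_cast
    field_simp
  · rw [fourier_eq_zero_of_support hl f hf v (not_le.1 hv)]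
    simp

lemma schwartz_bdd (f : SchwartzMap ℝ ℂ) : ∃ c : ℝ, ∀ x, ‖f x‖ ≤ c := by
  obtain ⟨c, hc⟩ := f.decay 0 0
  exact ⟨c, fun x => by simpa using hc.2 x⟩

lemma cs_aux (K : SchwartzMap ℝ ℂ) (F : ℝ → ℂ) (hF : Continuous F) (c : ℝ)
    (hc : ∀ x, ‖F x‖ ≤ c) :
    ‖∫ v, K v * F v‖ ^ 2 ≤ (∫ v, ‖K v‖) * ∫ v, ‖K v‖ * ‖F v‖ ^ 2 := by
  have hK : Integrable (fun v => ‖K v‖) := K.integrable.norm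
  have h1 : Integrable (fun v => ‖K v‖ * ‖F v‖) :=
    hK.mul_bdd (c := c) (by fun_prop) (.of_forall fun x => by simpa using hc x)
  have h2 : Integrable (fun v => ‖K v‖ * ‖F v‖ ^ 2) :=
    hK.mul_bdd (c := c ^ 2) (by fun_prop) (.of_forall fun x => by
      simpa using pow_le_pow_left₀ (norm_nonneg _) (hc x) 2)
  have h3 : ‖∫ v, K v * F v‖ ≤ ∫ v, ‖K v‖ * ‖F v‖ := by
    simpa using norm_integral_le_integral_norm (fun v => K v * F v)
  have h4 := discrim_le_zero (a := ∫ v, ‖K v‖) (b := -2 * ∫ v, ‖K v‖ * ‖F v‖)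
    (c := ∫ v, ‖K v‖ * ‖F v‖ ^ 2) (by
      intro x
      have : ∫ v, ‖K v‖ * (x - ‖F v‖) ^ 2 = (∫ v, ‖K v‖) * (x * x) +
          (-2 * ∫ v, ‖K v‖ * ‖F v‖) * x + ∫ v, ‖K v‖ * ‖F v‖ ^ 2 := by
        have e : ∀ v, ‖K v‖ * (x - ‖F v‖) ^ 2 = ‖K v‖ * (x * x) + (‖K v‖ * ‖F v‖) * (-2 * x) +
          ‖K v‖ * ‖F v‖ ^ 2 := fun v => by ring
        simp only [e]
        rw [integral_add (f := fun v => ‖K v‖ * (x * x) + (‖K v‖ * ‖F v‖) * (-2 * x))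
          ((hK.mul_const _).add (h1.mul_const _)) h2, integral_add (hK.mul_const _) (h1.mul_const _), integral_mul_const, integral_mul_const]
        ring
      rw [← this]
      exact integral_nonneg fun v => by positivity)
  unfold discrim at h4
  have h5 := pow_le_pow_left₀ (norm_nonneg _) h3 2
  nlinarith

lemma decay_aux (K : SchwartzMap ℝ ℂ) (q : ℝ) (hq : 1 < q) :
    ∃ C : ℝ, 0 ≤ C ∧ ∀ (l : ℤ) (v : ℝ), (l : ℝ) ≤ v → v ≤ l + 1 →
      ‖K v‖ ≤ C * (1 + |(l : ℝ)|) ^ (-q) := by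
  obtain ⟨k, hk⟩ := exists_nat_ge q
  obtain ⟨D, hD⟩ : ∃ D : ℝ, ∀ v, (1 + |v|) ^ k * ‖K v‖ ≤ D :=
    ⟨_, fun v => by
      simpa using SchwartzMap.one_add_le_sup_seminorm_apply (𝕜 := ℂ) (m := (k, 0)) (k := k) (n := 0)
        le_rfl le_rfl K v⟩
  have hD0 : 0 ≤ D := le_trans (by positivity) (hD 0)
  refine ⟨D * 2 ^ q, by positivity, fun l v h1 h2 => ?_⟩
  have hl : (1 + |(l : ℝ)|) / 2 ≤ 1 + |v| := by
    have : |(l : ℝ)| ≤ |v| + 1 := by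
      rw [abs_le]; constructor <;> [linarith [neg_abs_le v]; linarith [le_abs_self v]]
    linarith [abs_nonneg v]
  have h3 : ((1 + |(l : ℝ)|) / 2) ^ q ≤ (1 + |v|) ^ k := by
    calc ((1 + |(l : ℝ)|) / 2) ^ q ≤ (1 + |v|) ^ q :=
          Real.rpow_le_rpow (by positivity) hl (by linarith)
      _ ≤ (1 + |v|) ^ (k : ℝ) :=
          Real.rpow_le_rpow_of_exponent_le (by linarith [abs_nonneg v]) hk
      _ = _ := Real.rpow_natCast _ _
  rw [Real.div_rpow (by positivity) (by positivity)] at h3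
  have h4 : (1 + |(l : ℝ)|) ^ q / 2 ^ q * ‖K v‖ ≤ D :=
    (mul_le_mul_of_nonneg_right h3 (norm_nonneg _)).trans (hD v)
  rw [Real.rpow_neg (by positivity), ← div_eq_mul_inv, le_div_iff₀ (by positivity)]
  rw [div_mul_eq_mul_div, div_le_iff₀ (by positivity)] at h4
  linarith

lemma fubini_aux (K f : SchwartzMap ℝ ℂ) (lam a b : ℝ) (hab : a ≤ b) :
    Integrable (fun t : ℝ => ∫ v, ‖K v‖ * ‖f (t + v / lam)‖ ^ 2) (volume.restrict (Set.Ioc a b)) ∧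
    Integrable (fun v : ℝ => ‖K v‖ * ∫ t in (a + v / lam)..(b + v / lam), ‖f t‖ ^ 2) ∧
    ∫ t in a..b, ∫ v, ‖K v‖ * ‖f (t + v / lam)‖ ^ 2 =
      ∫ v, ‖K v‖ * ∫ t in (a + v / lam)..(b + v / lam), ‖f t‖ ^ 2 := by
  obtain ⟨c, hc⟩ := schwartz_bdd f
  have hcont : Continuous (fun p : ℝ × ℝ => ‖f (p.1 + p.2 / lam)‖ ^ 2) := by
    have := f.continuous
    fun_prop
  have hi : Integrable (Function.uncurry fun t v : ℝ => ‖K v‖ * ‖f (t + v / lam)‖ ^ 2)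
      ((volume.restrict (Set.Ioc a b)).prod volume) := by
    have h1 : Integrable (fun p : ℝ × ℝ => ‖K p.2‖) ((volume.restrict (Set.Ioc a b)).prod volume) :=
      K.integrable.norm.comp_snd _
    exact h1.mul_bdd (c := c ^ 2) hcont.aestronglyMeasurable (.of_forall fun x => by
      simpa using pow_le_pow_left₀ (norm_nonneg _) (hc _) 2)
  have e : ∀ v : ℝ, ∫ t in Set.Ioc a b, ‖K v‖ * ‖f (t + v / lam)‖ ^ 2 =
      ‖K v‖ * ∫ t in (a + v / lam)..(b + v / lam), ‖f t‖ ^ 2 := by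
    intro v
    rw [integral_const_mul, ← intervalIntegral.integral_of_le hab,
      intervalIntegral.integral_comp_add_right (fun t => ‖f t‖ ^ 2)]
  refine ⟨hi.integral_prod_left, ?_, ?_⟩
  · have := hi.integral_prod_right
    simpa only [Function.uncurry, e] using this
  · rw [intervalIntegral.integral_of_le hab, integral_integral_swap hi]
    simp only [e]

lemma summable_aux (q : ℝ) (hq : 1 < q) : Summable (fun l : ℤ => (1 + |(l : ℝ)|) ^ (-q)) := by
  have hn : Summable (fun n : ℕ => (1 + (n : ℝ)) ^ (-q)) := by
    have := (summable_nat_add_iff 1).2 (Real.summable_nat_rpow.2 (by linarith : -q < -1))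
    simpa [add_comm] using this
  exact Summable.of_nat_of_neg (by simpa using hn) (by simpa using hn)

theorem derivative_L2_bound_of_band_limited (q : ℝ) (hq : 1 < q) :
    ∃ B : ℝ, 0 < B ∧ ∀ lam : ℝ, 0 < lam → ∀ f : SchwartzMap ℝ ℂ,
      Function.support (fourierTf f) ⊆ Set.Icc (-(2 * lam)) (2 * lam) →
      ∀ τ' τ'' : ℝ, τ' ≤ τ'' →
        (∫ t in τ'..τ'', ‖deriv (⇑f) t‖ ^ 2) ≤
          B * lam ^ 2 * ∑' ℓ : ℤ,
            (1 + |(ℓ : ℝ)|) ^ (-q) *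
              ∫ t in (τ' + (ℓ : ℝ) / lam)..(τ'' + ((ℓ : ℝ) + 1) / lam), ‖f t‖ ^ 2 := by
  obtain ⟨M, hM⟩ := exists_multiplier
  let K : SchwartzMap ℝ ℂ := 𝓕 M
  have hK : (K : ℝ → ℂ) = 𝓕 (M : ℝ → ℂ) := SchwartzMap.fourier_coe M
  obtain ⟨C, hC0, hC⟩ := decay_aux K q hq
  have hA0 : 0 ≤ ∫ v, ‖K v‖ := integral_nonneg fun v => norm_nonneg _
  refine ⟨(∫ v, ‖K v‖) * C + 1, by positivity, ?_⟩
  intro lam hl f hf a b hab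
  obtain ⟨hI1, hI2, hFub⟩ := fubini_aux K f lam a b hab
  obtain ⟨c, hc⟩ := schwartz_bdd f
  have hfc : Continuous f := f.continuous
  have hsq : Integrable (fun t => ‖f t‖ ^ 2) := by
    have := (f.integrable (μ := volume)).norm.mul_bdd (c := c) (g := fun t => ‖f t‖) hfc.norm.aestronglyMeasurable
      (.of_forall fun x => by simpa using hc x)
    simpa only [sq] using this
  have hsq0 : 0 ≤ᵐ[volume] (fun t => ‖f t‖ ^ 2) := .of_forall fun t => by positivity
  have hle : ∀ l : ℤ, a + (l : ℝ) / lam ≤ b + ((l : ℝ) + 1) / lam := fun l => by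
    have : (l : ℝ) / lam ≤ ((l : ℝ) + 1) / lam := by gcongr; linarith
    linarith
  have hAnn : ∀ l : ℤ, 0 ≤ ∫ t in (a + (l : ℝ) / lam)..(b + ((l : ℝ) + 1) / lam), ‖f t‖ ^ 2 :=
    fun l => intervalIntegral.integral_nonneg (hle l) fun t _ => by positivity
  have hsum : Summable (fun l : ℤ => (1 + |(l : ℝ)|) ^ (-q) *
      ∫ t in (a + (l : ℝ) / lam)..(b + ((l : ℝ) + 1) / lam), ‖f t‖ ^ 2) := by
    refine Summable.of_nonneg_of_le (fun l => mul_nonneg (by positivity) (hAnn l)) (fun l => ?_)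
      ((summable_aux q hq).mul_right (∫ t, ‖f t‖ ^ 2))
    refine mul_le_mul_of_nonneg_left ?_ (by positivity)
    rw [intervalIntegral.integral_of_le (hle l)]
    exact setIntegral_le_integral hsq hsq0
  -- pointwise bound
  have hpt : ∀ t : ℝ, ‖deriv f t‖ ^ 2 ≤
      lam ^ 2 * ((∫ v, ‖K v‖) * ∫ v, ‖K v‖ * ‖f (t + v / lam)‖ ^ 2) := by
    intro t
    rw [deriv_repr M hM hl f hf t, ← hK, norm_mul, mul_pow, Complex.norm_real, Real.norm_eq_abs,
      sq_abs]
    exact mul_le_mul_of_nonneg_left (cs_aux K (fun v => f (t + v / lam)) (by fun_prop) c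
      (fun x => hc _)) (by positivity)
  have hdc : Continuous (deriv f) := (f.smooth 1).continuous_deriv le_rfl
  have step1 : (∫ t in a..b, ‖deriv f t‖ ^ 2) ≤ lam ^ 2 * ((∫ v, ‖K v‖) *
      ∫ v, ‖K v‖ * ∫ t in (a + v / lam)..(b + v / lam), ‖f t‖ ^ 2) := by
    rw [← hFub, ← intervalIntegral.integral_const_mul, ← intervalIntegral.integral_const_mul]
    refine intervalIntegral.integral_mono_on hab ?_ ?_ (fun t _ => hpt t)
    · exact Continuous.intervalIntegrable (by fun_prop) _ _
    · rw [intervalIntegrable_iff_integrableOn_Ioc_of_le hab]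
      exact (hI1.const_mul _).const_mul _
  have step2 : ∫ v, ‖K v‖ * ∫ t in (a + v / lam)..(b + v / lam), ‖f t‖ ^ 2 ≤
      C * ∑' l : ℤ, (1 + |(l : ℝ)|) ^ (-q) *
        ∫ t in (a + (l : ℝ) / lam)..(b + ((l : ℝ) + 1) / lam), ‖f t‖ ^ 2 := by
    have hs := hI2.hasSum_intervalIntegral 0
    rw [← tsum_mul_left, ← hs.tsum_eq]
    refine hs.summable.tsum_le_tsum (fun l => ?_) (hsum.mul_left C)
    rw [← mul_assoc]
    have e : ∫ v in (0 + (l : ℝ))..(0 + (l : ℝ) + 1), C * (1 + |(l : ℝ)|) ^ (-q) *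
        ∫ t in (a + (l : ℝ) / lam)..(b + ((l : ℝ) + 1) / lam), ‖f t‖ ^ 2 =
        C * (1 + |(l : ℝ)|) ^ (-q) *
        ∫ t in (a + (l : ℝ) / lam)..(b + ((l : ℝ) + 1) / lam), ‖f t‖ ^ 2 := by
      rw [intervalIntegral.integral_const]; simp
    rw [← e]
    refine intervalIntegral.integral_mono_on (by linarith) hI2.intervalIntegrable
      intervalIntegrable_const (fun v hv => ?_)
    have hv1 : (l : ℝ) ≤ v := by linarith [hv.1]
    have hv2 : v ≤ l + 1 := by linarith [hv.2]
    refine mul_le_mul (hC l v hv1 hv2) ?_ ?_ (by positivity)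
    · refine intervalIntegral.integral_mono_interval ?_ (by linarith) ?_
        (ae_restrict_of_ae hsq0) hsq.intervalIntegrable
      · gcongr
      · gcongr
    · exact intervalIntegral.integral_nonneg (by linarith) fun t _ => by positivity
  have hS0 : 0 ≤ ∑' l : ℤ, (1 + |(l : ℝ)|) ^ (-q) *
        ∫ t in (a + (l : ℝ) / lam)..(b + ((l : ℝ) + 1) / lam), ‖f t‖ ^ 2 :=
    tsum_nonneg fun l => mul_nonneg (by positivity) (hAnn l)
  refine step1.trans ?_
  have := mul_le_mul_of_nonneg_left (mul_le_mul_of_nonneg_left step2 hA0) (sq_nonneg lam)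
  nlinarith [mul_nonneg (sq_nonneg lam) hS0]
end

section
/- There exists a constant B > 0, depending only on ζ, such that if ω₀ ≤ 1 then for every admissible Ψ as in the context and every τ̄ ∈ ℝ, ∫_X ∫₀^{2π} ∫_{τ̄−1}^{τ̄} (∂_φ Ψ_♭)²(t,φ,x) dt dφ dμ(x) ≤ B ω₀^{-1} · sup_{τ̃ ∈ ℝ} ∫_X ∫₀^{2π} ∫_{τ̃−1}^{τ̃} (∂_φ Ψ)²(t,φ,x) dt dφ dμ(x). -/
open MeasureTheory Real ENNReal

/-- The low-pass kernel `K_λ(t) = (2π)⁻¹ λ ∫ ζ(ω) e^{iλωt} dω`. -/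
noncomputable def lowPassKernel (ζ : ℝ → ℝ) (lam t : ℝ) : ℂ :=
  ((2 * Real.pi)⁻¹ * lam : ℝ) * ∫ ω : ℝ, (ζ ω : ℂ) * Complex.exp (Complex.I * (lam * ω * t))

/-- The low-pass filtering `K_λ ∗ f` of `f` at scale `λ`. -/
noncomputable def lowPassFilter (ζ : ℝ → ℝ) (lam : ℝ) (f : ℝ → ℂ) (t : ℝ) : ℂ :=
  ∫ s : ℝ, lowPassKernel ζ lam (t - s) * f s

/-- The `k`-th azimuthal Fourier mode `Ψ_k(t,x) = (2π)⁻¹ ∫₀^{2π} Ψ(t,φ,x) e^{ikφ} dφ`. -/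
noncomputable def azMode {X : Type} (Ψ : ℝ → ℝ → X → ℝ) (k : ℤ) (t : ℝ) (x : X) : ℂ :=
  ((2 * Real.pi)⁻¹ : ℝ) *
    ∫ φ in (0 : ℝ)..(2 * Real.pi), (Ψ t φ x : ℂ) * Complex.exp (Complex.I * ((k : ℝ) * φ))

/-- The low-frequency part
`Ψ_♭(t,φ,x) = Σ_{k ≠ 0} e^{-ikφ} (K_{ω₀|k|} ∗ Ψ_k(·,x))(t)`. -/
noncomputable def lowPart {X : Type} (ζ : ℝ → ℝ) (ω₀ : ℝ) (Ψ : ℝ → ℝ → X → ℝ)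
    (t φ : ℝ) (x : X) : ℂ :=
  ∑' k : {k : ℤ // k ≠ 0},
    Complex.exp (-(Complex.I * ((k.1 : ℝ) * φ))) *
      lowPassFilter ζ (ω₀ * |(k.1 : ℝ)|) (fun s => azMode Ψ k.1 s x) t

/-- The high-frequency part `Ψ_♯ = Ψ − Ψ_♭`. -/
noncomputable def highPart {X : Type} (ζ : ℝ → ℝ) (ω₀ : ℝ) (Ψ : ℝ → ℝ → X → ℝ)
    (t φ : ℝ) (x : X) : ℂ :=
  (Ψ t φ x : ℂ) - lowPart ζ ω₀ Ψ t φ x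


lemma aux_kernel_schwartz (ζ : ℝ → ℝ) (hζ_smooth : ContDiff ℝ (⊤ : ℕ∞) ζ)
    (hζ_supp : Function.support ζ ⊆ Set.Icc (-2) 2) :
    ∃ S : SchwartzMap ℝ ℂ, ∀ lam t : ℝ, lowPassKernel ζ lam t =
      ((2 * Real.pi)⁻¹ * lam : ℝ) * S (-(lam * t) / (2 * π)) := by
  have h1 : HasCompactSupport (fun x => (ζ x : ℂ)) := by
    refine HasCompactSupport.intro (isCompact_Icc (a := (-2:ℝ)) (b := 2)) ?_
    intro x hx
    have : ζ x = 0 := by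
      by_contra h
      exact hx (hζ_supp h)
    simp [this]
  have h2 : ContDiff ℝ (⊤ : ℕ∞) (fun x => (ζ x : ℂ)) := Complex.ofRealCLM.contDiff.comp hζ_smooth
  refine ⟨FourierTransform.fourier (h1.toSchwartzMap h2), fun lam t => ?_⟩
  rw [SchwartzMap.fourier_coe, lowPassKernel]
  congr 1
  rw [Real.fourier_real_eq_integral_exp_smul]
  congr 1
  ext ω
  rw [smul_eq_mul, mul_comm]
  congr 2
  push_cast
  have : (π : ℂ) ≠ 0 := by exact_mod_cast Real.pi_ne_zero
  field_simp

lemma aux_kernel_bound (ζ : ℝ → ℝ) (hζ_smooth : ContDiff ℝ (⊤ : ℕ∞) ζ)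
    (hζ_supp : Function.support ζ ⊆ Set.Icc (-2) 2) :
    ∃ C : ℝ, 0 < C ∧ ∀ lam t : ℝ, 0 < lam →
      ‖lowPassKernel ζ lam t‖ ≤ C * (lam * (1 + (lam * t) ^ 2)⁻¹) := by
  obtain ⟨S, hS⟩ := aux_kernel_schwartz ζ hζ_smooth hζ_supp
  obtain ⟨C0, hC0, h0⟩ := S.decay 0 0
  obtain ⟨C2, hC2, h2⟩ := S.decay 2 0
  simp only [norm_iteratedFDeriv_zero, pow_zero, one_mul] at h0 h2
  refine ⟨(2 * π)⁻¹ * (C0 + (2 * π) ^ 2 * C2), by positivity, fun lam t hl => ?_⟩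
  rw [hS, norm_mul, Complex.norm_real, Real.norm_of_nonneg (by positivity)]
  set y := -(lam * t) / (2 * π) with hy
  have hyy : lam * t = - (2 * π) * y := by
    rw [hy]; field_simp
  have key : ‖S y‖ ≤ (C0 + (2 * π) ^ 2 * C2) * (1 + (lam * t) ^ 2)⁻¹ := by
    rw [← div_eq_mul_inv, le_div_iff₀ (by positivity), hyy]
    have := h2 y
    rw [Real.norm_eq_abs, sq_abs] at this
    nlinarith [h0 y, mul_le_mul_of_nonneg_left this (by positivity : 0 ≤ (2 * π) ^ 2)]
  calc _ ≤ (2 * π)⁻¹ * lam * ((C0 + (2 * π) ^ 2 * C2) * (1 + (lam * t) ^ 2)⁻¹) := by gcongr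
    _ = _ := by ring

lemma aux_kernel_cont (ζ : ℝ → ℝ) (hζ_smooth : ContDiff ℝ (⊤ : ℕ∞) ζ)
    (hζ_supp : Function.support ζ ⊆ Set.Icc (-2) 2) (lam : ℝ) :
    Continuous (lowPassKernel ζ lam) := by
  obtain ⟨S, hS⟩ := aux_kernel_schwartz ζ hζ_smooth hζ_supp
  have : lowPassKernel ζ lam = fun t => ((2 * Real.pi)⁻¹ * lam : ℝ) * S (-(lam * t) / (2 * π)) :=
    funext fun t => hS lam t
  rw [this]
  have := S.continuous
  fun_prop

noncomputable def auxKap (C lam u : ℝ) : ℝ≥0∞ :=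
  ENNReal.ofReal (C * (lam * (1 + (lam * u) ^ 2)⁻¹))

lemma auxKap_meas (C lam : ℝ) : Measurable (auxKap C lam) := by
  unfold auxKap
  fun_prop

lemma auxKap_neg (C lam u : ℝ) : auxKap C lam (-u) = auxKap C lam u := by
  simp [auxKap]

lemma auxKap_lintegral (C lam : ℝ) (hC : 0 < C) (hl : 0 < lam) :
    ∫⁻ u, auxKap C lam u = ENNReal.ofReal (C * π) := by
  unfold auxKap
  have hi : Integrable (fun u : ℝ => (1 + (lam * u) ^ 2)⁻¹) :=
    integrable_inv_one_add_sq.comp_mul_left' hl.ne'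
  rw [← ofReal_integral_eq_lintegral_ofReal ((hi.const_mul lam).const_mul C)
    (Filter.Eventually.of_forall fun u => by positivity)]
  congr 1
  rw [integral_const_mul, integral_const_mul,
    Measure.integral_comp_mul_left (fun u : ℝ => (1 + u ^ 2)⁻¹), integral_univ_inv_one_add_sq,
    abs_of_pos (by positivity), smul_eq_mul]
  field_simp

lemma auxKap_lintegral_shift (C lam t : ℝ) (hC : 0 < C) (hl : 0 < lam) :
    ∫⁻ s, auxKap C lam (t - s) = ENNReal.ofReal (C * π) := by
  rw [lintegral_sub_left_eq_self (auxKap C lam) t, auxKap_lintegral C lam hC hl]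

lemma aux_filter_le (ζ : ℝ → ℝ) (C lam : ℝ)
    (hK : ∀ t, ‖lowPassKernel ζ lam t‖ ≤ C * (lam * (1 + (lam * t) ^ 2)⁻¹))
    (f : ℝ → ℂ) (t : ℝ) :
    ‖lowPassFilter ζ lam f t‖ₑ ≤ ∫⁻ s, auxKap C lam (t - s) * ‖f s‖ₑ := by
  refine (enorm_integral_le_lintegral_enorm _).trans (lintegral_mono fun s => ?_)
  rw [enorm_mul]
  gcongr
  rw [← ofReal_norm]
  exact ENNReal.ofReal_le_ofReal (hK _)

lemma aux_cs (ζ : ℝ → ℝ) (C lam : ℝ) (hC : 0 < C) (hl : 0 < lam)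
    (hK : ∀ t, ‖lowPassKernel ζ lam t‖ ≤ C * (lam * (1 + (lam * t) ^ 2)⁻¹))
    (f : ℝ → ℂ) (hf : Measurable f) (t : ℝ) :
    ‖lowPassFilter ζ lam f t‖ₑ ^ 2 ≤
      ENNReal.ofReal (C * π) * ∫⁻ s, auxKap C lam (t - s) * ‖f s‖ₑ ^ 2 := by
  have hm : Measurable fun s => auxKap C lam (t - s) :=
    (auxKap_meas C lam).comp (measurable_const.sub measurable_id)
  have h1 := aux_filter_le ζ C lam hK f t
  have h2 := ENNReal.lintegral_mul_norm_pow_le (μ := volume)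
    (f := fun s => auxKap C lam (t - s)) (g := fun s => auxKap C lam (t - s) * ‖f s‖ₑ ^ 2)
    hm.aemeasurable (hm.mul (hf.enorm.pow_const 2)).aemeasurable
    (p := 1/2) (q := 1/2) (by norm_num) (by norm_num) (by norm_num)
  have h3 : ∀ s, auxKap C lam (t - s) ^ (1/2 : ℝ) * (auxKap C lam (t - s) * ‖f s‖ₑ ^ 2) ^ (1/2 : ℝ)
      = auxKap C lam (t - s) * ‖f s‖ₑ := by
    intro s
    rw [ENNReal.mul_rpow_of_nonneg _ _ (by norm_num), ← mul_assoc,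
      ← ENNReal.rpow_add_of_nonneg _ _ (by norm_num) (by norm_num), ← ENNReal.rpow_natCast,
      ← ENNReal.rpow_mul]
    norm_num
  simp_rw [h3] at h2
  rw [auxKap_lintegral_shift C lam t hC hl, ← ENNReal.mul_rpow_of_nonneg _ _ (by norm_num)] at h2
  calc _ ≤ ((ENNReal.ofReal (C * π) * ∫⁻ s, auxKap C lam (t - s) * ‖f s‖ₑ ^ 2) ^ (1/2 : ℝ)) ^ 2 := by
        gcongr
        exact h1.trans h2
    _ = _ := by
        rw [← ENNReal.rpow_natCast, ← ENNReal.rpow_mul]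
        norm_num

lemma aux_window (C lam ω₀ τ s : ℝ) (n : ℤ) (hC : 0 < C) (hω : 0 < ω₀) (hω1 : ω₀ ≤ 1)
    (hl : ω₀ ≤ lam) (hs : s ∈ Set.Icc (τ + n - 1) (τ + n)) :
    ∫⁻ t in Set.Icc (τ - 1) τ, auxKap C lam (t - s) ≤
      ENNReal.ofReal (8 * C / ω₀ * (1 + (n : ℝ) ^ 2)⁻¹) := by
  have hl0 : 0 < lam := hω.trans_le hl
  by_cases hn : |n| ≤ 1
  · refine (setLIntegral_le_lintegral _ _).trans ?_
    rw [lintegral_sub_right_eq_self (auxKap C lam) s, auxKap_lintegral C lam hC hl0]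
    apply ENNReal.ofReal_le_ofReal
    have h1 : (n : ℝ) ^ 2 ≤ 1 := by
      have : |(n : ℝ)| ≤ 1 := by exact_mod_cast hn
      rwa [sq_le_one_iff_abs_le_one]
    have h2 : (1 / 2 : ℝ) ≤ (1 + (n : ℝ) ^ 2)⁻¹ := by
      rw [one_div]; gcongr; linarith
    have h3 : 8 * C ≤ 8 * C / ω₀ := by
      rw [le_div_iff₀ hω]; nlinarith
    calc C * π ≤ 8 * C * (1 / 2) := by nlinarith [Real.pi_le_four]
      _ ≤ _ := by gcongr
  · have hn2 : (2 : ℝ) ≤ |(n : ℝ)| := by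
      have : (2 : ℤ) ≤ |n| := by omega
      exact_mod_cast this
    have hb : ∀ t ∈ Set.Icc (τ - 1) τ, auxKap C lam (t - s) ≤
        ENNReal.ofReal (8 * C / ω₀ * (1 + (n : ℝ) ^ 2)⁻¹) := by
      intro t ht
      apply ENNReal.ofReal_le_ofReal
      have h1 : |(n : ℝ)| / 2 ≤ |t - s| := by
        have : |(n : ℝ)| - 1 ≤ |t - s| := by
          have h5 : |(n : ℝ)| ≤ |t - s| + |(n : ℝ) + (t - s)| := by
            have := abs_sub ((n : ℝ) + (t - s)) (t - s)
            rw [add_sub_cancel_right] at this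
            linarith
          have h6 : |(n : ℝ) + (t - s)| ≤ 1 := by
            rw [abs_le]; constructor <;> linarith [ht.1, ht.2, hs.1, hs.2]
          linarith
        linarith
      have h2 : (n : ℝ) ^ 2 / 4 ≤ (t - s) ^ 2 := by
        rw [← sq_abs (n : ℝ), ← sq_abs (t - s)]
        nlinarith [abs_nonneg (n : ℝ)]
      have h4 : 4 ≤ (n : ℝ) ^ 2 := by rw [← sq_abs]; nlinarith
      rw [← div_eq_mul_inv, ← div_eq_mul_inv, div_div, mul_div_assoc', div_le_div_iff₀ (by positivity) (by positivity)]
      have h5 : 1 + (n : ℝ) ^ 2 ≤ 8 * (t - s) ^ 2 := by nlinarith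
      have h6 : lam * ω₀ ≤ lam ^ 2 := by nlinarith
      have h7 : (lam * ω₀) * (1 + (n : ℝ) ^ 2) ≤ lam ^ 2 * (8 * (t - s) ^ 2) := by
        gcongr
      calc C * lam * (ω₀ * (1 + (n : ℝ) ^ 2)) = C * ((lam * ω₀) * (1 + (n : ℝ) ^ 2)) := by ring
        _ ≤ C * (lam ^ 2 * (8 * (t - s) ^ 2)) := by gcongr
        _ ≤ C * (8 * (1 + (lam * (t - s)) ^ 2)) := by
            refine mul_le_mul_of_nonneg_left ?_ hC.le
            nlinarith
        _ = _ := by ring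
    refine (setLIntegral_mono' measurableSet_Icc hb).trans ?_
    simp

noncomputable def auxCf (f : ℝ → ℂ) (k : ℤ) : ℂ :=
  ((2 * Real.pi)⁻¹ : ℝ) *
    ∫ φ in (0 : ℝ)..(2 * Real.pi), f φ * Complex.exp (Complex.I * ((k : ℝ) * φ))

lemma auxCf_eq (f : ℝ → ℂ) (k : ℤ) :
    auxCf f k = fourierCoeffOn Real.two_pi_pos f (-k) := by
  rw [fourierCoeffOn_eq_integral, auxCf, sub_zero, one_div, Complex.real_smul]
  congr 1
  refine intervalIntegral.integral_congr fun φ _ => ?_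
  simp only [neg_neg, fourier_coe_apply, smul_eq_mul]
  rw [mul_comm]
  congr 2
  have : (π : ℂ) ≠ 0 := by exact_mod_cast Real.pi_ne_zero
  push_cast
  try simp only [sub_zero]
  field_simp

lemma auxCf_parseval (f : ℝ → ℂ) (hf : Continuous f) :
    ∫⁻ φ in Set.Icc 0 (2 * π), ‖f φ‖ₑ ^ 2 =
      ENNReal.ofReal (2 * π) * ∑' k : ℤ, ‖auxCf f k‖ₑ ^ 2 := by
  have hL : MemLp f 2 (volume.restrict (Set.Ioc 0 (2 * π))) := by
    have : MemLp f 2 (volume.restrict (Set.Icc 0 (2 * π))) :=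
      by
      obtain ⟨M, hM⟩ := isCompact_Icc.exists_bound_of_continuousOn (s := Set.Icc 0 (2 * π)) hf.continuousOn
      exact MemLp.of_bound hf.aestronglyMeasurable M ((ae_restrict_iff' measurableSet_Icc).2 (Filter.Eventually.of_forall hM))
    exact this.mono_measure (Measure.restrict_mono Set.Ioc_subset_Icc_self le_rfl)
  have h := hasSum_sq_fourierCoeffOn Real.two_pi_pos hL
  have h' : HasSum (fun k : ℤ => ‖auxCf f k‖ ^ 2)
      ((2 * π - 0)⁻¹ • ∫ x in (0:ℝ)..(2 * π), ‖f x‖ ^ 2) := by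
    simp_rw [auxCf_eq]
    exact (Equiv.neg ℤ).hasSum_iff.mpr h
  have e1 : ∑' k : ℤ, ‖auxCf f k‖ₑ ^ 2 =
      ENNReal.ofReal ((2 * π - 0)⁻¹ • ∫ x in (0:ℝ)..(2 * π), ‖f x‖ ^ 2) := by
    rw [← h'.tsum_eq, ENNReal.ofReal_tsum_of_nonneg (fun _ => by positivity) h'.summable]
    refine tsum_congr fun k => ?_
    rw [← ofReal_norm, ENNReal.ofReal_pow (norm_nonneg _)]
  rw [e1, ← ENNReal.ofReal_mul (by positivity), sub_zero, smul_eq_mul,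
    mul_inv_cancel_left₀ (by positivity), intervalIntegral.integral_of_le (by positivity),
    ← integral_Icc_eq_integral_Ioc,
    ofReal_integral_eq_lintegral_ofReal
      (Continuous.integrableOn_Icc (by fun_prop))
      (Filter.Eventually.of_forall fun u => by positivity)]
  refine lintegral_congr fun φ => ?_
  rw [← ofReal_norm, ENNReal.ofReal_pow (norm_nonneg _)]

lemma aux_norm_exp (k : ℤ) (φ : ℝ) : ‖Complex.exp (Complex.I * ((k : ℝ) * φ))‖ = 1 := by
  rw [mul_comm, ← Complex.ofReal_mul, Complex.norm_exp_ofReal_mul_I]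

lemma aux_norm_exp_neg (k : ℤ) (φ : ℝ) : ‖Complex.exp (-(Complex.I * ((k : ℝ) * φ)))‖ = 1 := by
  have := aux_norm_exp (-k) φ
  rw [← this]
  push_cast
  ring_nf

lemma auxCf_series_cont (c : ℤ → ℂ) (hc : Summable fun k => ‖c k‖) :
    Continuous (fun φ : ℝ => ∑' k : ℤ, Complex.exp (-(Complex.I * ((k : ℝ) * φ))) * c k) := by
  refine continuous_tsum (fun k => by fun_prop) hc fun k φ => ?_
  rw [norm_mul, aux_norm_exp_neg, one_mul]

lemma aux_exp_integral (m : ℤ) :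
    ∫ φ in (0 : ℝ)..(2 * π), Complex.exp (Complex.I * ((m : ℝ) * φ)) =
      if m = 0 then (2 * π : ℂ) else 0 := by
  split_ifs with h
  · subst h; simp
  · have h1 : Complex.I * (m : ℂ) ≠ 0 := by simp [h]
    have : ∀ φ : ℝ, Complex.exp (Complex.I * ((m : ℝ) * φ)) = Complex.exp ((Complex.I * (m : ℂ)) * φ) := by
      intro φ; congr 1; push_cast; ring
    simp_rw [this]
    rw [integral_exp_mul_complex h1]
    have e2 : Complex.I * (m : ℂ) * ((2 * π : ℝ) : ℂ) = (m : ℂ) * (2 * π * Complex.I) := by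
      push_cast; ring
    rw [e2, Complex.exp_int_mul_two_pi_mul_I]
    simp

lemma auxCf_series (c : ℤ → ℂ) (hc : Summable fun k => ‖c k‖) (n : ℤ) :
    auxCf (fun φ : ℝ => ∑' k : ℤ, Complex.exp (-(Complex.I * ((k : ℝ) * φ))) * c k) n = c n := by
  unfold auxCf
  have hs := intervalIntegral.hasSum_integral_of_dominated_convergence
    (μ := volume) (a := 0) (b := 2 * π)
    (F := fun (k : ℤ) (φ : ℝ) => (Complex.exp (-(Complex.I * ((k : ℝ) * φ))) * c k) *
      Complex.exp (Complex.I * ((n : ℝ) * φ)))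
    (f := fun φ : ℝ => (∑' k : ℤ, Complex.exp (-(Complex.I * ((k : ℝ) * φ))) * c k) *
      Complex.exp (Complex.I * ((n : ℝ) * φ)))
    (fun k _ => ‖c k‖)
    (fun k => (Continuous.aestronglyMeasurable (by fun_prop)))
    (fun k => Filter.Eventually.of_forall fun φ _ => by
      rw [norm_mul, norm_mul, aux_norm_exp_neg, aux_norm_exp, one_mul, mul_one])
    (Filter.Eventually.of_forall fun φ _ => hc)
    (by simp)
    (Filter.Eventually.of_forall fun φ _ => by
      refine (Summable.hasSum ?_).mul_right _
      refine Summable.of_norm ?_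
      simpa only [norm_mul, aux_norm_exp_neg, one_mul] using hc)
  have hk : ∀ k : ℤ, ∫ φ in (0 : ℝ)..(2 * π), (Complex.exp (-(Complex.I * ((k : ℝ) * φ))) * c k) *
      Complex.exp (Complex.I * ((n : ℝ) * φ)) = if k = n then 2 * π * c n else 0 := by
    intro k
    have : ∀ φ : ℝ, (Complex.exp (-(Complex.I * ((k : ℝ) * φ))) * c k) *
      Complex.exp (Complex.I * ((n : ℝ) * φ)) =
        c k * Complex.exp (Complex.I * (((n - k : ℤ) : ℝ) * φ)) := by
      intro φ
      rw [mul_comm (Complex.exp _) (c k), mul_assoc, ← Complex.exp_add]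
      congr 2
      push_cast; ring
    simp_rw [this]
    rw [intervalIntegral.integral_const_mul, aux_exp_integral]
    by_cases h : k = n
    · subst h; simp [mul_comm]
    · rw [if_neg (by omega), if_neg h, mul_zero]
  simp_rw [hk] at hs
  rw [← hs.tsum_eq, tsum_ite_eq]
  have : (π : ℂ) ≠ 0 := by exact_mod_cast Real.pi_ne_zero
  push_cast
  field_simp

lemma auxCf_deriv (f f' : ℝ → ℂ) (hf : ∀ φ, HasDerivAt f (f' φ) φ) (hf' : Continuous f')
    (hp : f (2 * π) = f 0) (k : ℤ) :
    auxCf f' k = -(Complex.I * (k : ℝ)) * auxCf f k := by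
  unfold auxCf
  have he : ∀ φ : ℝ, HasDerivAt (fun φ : ℝ => Complex.exp (Complex.I * ((k : ℝ) * φ)))
      (Complex.exp (Complex.I * ((k : ℝ) * φ)) * (Complex.I * (k : ℝ))) φ := by
    intro φ
    have h0 : HasDerivAt (fun z : ℝ => Complex.I * ((k : ℝ) * (z : ℂ))) (Complex.I * ((k : ℝ) * 1)) φ :=
      ((Complex.ofRealCLM.hasDerivAt (x := φ)).const_mul _).const_mul _
    simpa using h0.cexp
  have hc : Continuous f := continuous_iff_continuousAt.2 fun φ => (hf φ).continuousAt
  have h := intervalIntegral.integral_mul_deriv_eq_deriv_mul (a := 0) (b := 2 * π)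
    (u := f) (v := fun φ : ℝ => Complex.exp (Complex.I * ((k : ℝ) * φ)))
    (u' := f') (v' := fun φ : ℝ => Complex.exp (Complex.I * ((k : ℝ) * φ)) * (Complex.I * (k : ℝ)))
    (fun φ _ => hf φ) (fun φ _ => he φ) (hf'.intervalIntegrable _ _)
    (Continuous.intervalIntegrable (by fun_prop) _ _)
  have e2 : Complex.exp (Complex.I * ((k : ℝ) * ((2 * π : ℝ) : ℂ))) = 1 := by
    have : Complex.I * ((k : ℝ) * ((2 * π : ℝ) : ℂ)) = (k : ℂ) * (2 * π * Complex.I) := by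
      push_cast; ring
    rw [this, Complex.exp_int_mul_two_pi_mul_I]
  have e3 : ∫ φ in (0:ℝ)..(2 * π), f φ * (Complex.exp (Complex.I * ((k : ℝ) * φ)) * (Complex.I * (k : ℝ)))
      = (∫ φ in (0:ℝ)..(2 * π), f φ * Complex.exp (Complex.I * ((k : ℝ) * φ))) * (Complex.I * (k : ℝ)) := by
    rw [← intervalIntegral.integral_mul_const]
    simp_rw [mul_assoc]
  rw [e3] at h
  rw [e2, hp] at h
  simp only [Complex.ofReal_zero, mul_zero, Complex.exp_zero, sub_self, zero_sub] at h
  rw [← neg_eq_iff_eq_neg.2 h]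
  ring

structure AuxGood (T : ℝ) (f : ℝ → ℝ → ℂ) : Prop where
  smooth : ContDiff ℝ (⊤ : ℕ∞) (fun p : ℝ × ℝ => f p.1 p.2)
  per : ∀ t φ, f t (φ + 2 * π) = f t φ
  supp : ∀ t φ, T < |t| → f t φ = 0

noncomputable def auxD (f : ℝ → ℝ → ℂ) (t φ : ℝ) : ℂ := deriv (fun φ' => f t φ') φ

lemma AuxGood.hasDerivAt {T : ℝ} {f : ℝ → ℝ → ℂ} (h : AuxGood T f) (t φ : ℝ) :
    HasDerivAt (f t) (auxD f t φ) φ := by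
  have h1 : ContDiff ℝ (⊤ : ℕ∞) (f t) :=
    h.smooth.comp (contDiff_const.prodMk contDiff_id : ContDiff ℝ _ fun φ : ℝ => (t, φ))
  exact (h1.differentiable (by simp) φ).hasDerivAt

lemma AuxGood.auxD_eq {T : ℝ} {f : ℝ → ℝ → ℂ} (h : AuxGood T f) (t φ : ℝ) :
    auxD f t φ = fderiv ℝ (fun p : ℝ × ℝ => f p.1 p.2) (t, φ) (0, 1) := by
  have h1 : HasFDerivAt (fun p : ℝ × ℝ => f p.1 p.2) _ (t, φ) :=
    (h.smooth.differentiable (by simp) (t, φ)).hasFDerivAt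
  have h2 : HasDerivAt (fun φ : ℝ => (t, φ)) ((0 : ℝ), (1 : ℝ)) φ :=
    (hasDerivAt_const φ t).prodMk (hasDerivAt_id φ)
  exact (h1.comp_hasDerivAt φ h2).deriv

lemma AuxGood.D {T : ℝ} {f : ℝ → ℝ → ℂ} (h : AuxGood T f) : AuxGood T (auxD f) := by
  refine ⟨?_, ?_, ?_⟩
  · simp_rw [h.auxD_eq]
    have : ContDiff ℝ (⊤ : ℕ∞) (fderiv ℝ (fun p : ℝ × ℝ => f p.1 p.2)) :=
      h.smooth.fderiv_right (by simp)
    exact this.clm_apply contDiff_const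
  · intro t φ
    unfold auxD
    rw [← deriv_comp_add_const]
    congr 1
    ext φ'
    exact h.per t φ'
  · intro t φ ht
    unfold auxD
    have : (fun φ' => f t φ') = fun _ => 0 := funext fun φ' => h.supp t φ' ht
    rw [this, deriv_const]

lemma AuxGood.cont {T : ℝ} {f : ℝ → ℝ → ℂ} (h : AuxGood T f) (t : ℝ) : Continuous (f t) :=
  h.smooth.continuous.comp (by fun_prop : Continuous fun φ : ℝ => (t, φ))

lemma AuxGood.cf_D {T : ℝ} {f : ℝ → ℝ → ℂ} (h : AuxGood T f) (t : ℝ) (k : ℤ) :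
    auxCf (auxD f t) k = -(Complex.I * (k : ℝ)) * auxCf (f t) k := by
  refine auxCf_deriv _ _ (h.hasDerivAt t) (h.D.cont t) ?_ k
  have := h.per t 0
  rwa [zero_add] at this

lemma AuxGood.cf_bound {T : ℝ} {f : ℝ → ℝ → ℂ} (h : AuxGood T f) :
    ∃ M : ℝ, 0 ≤ M ∧ ∀ t k, ‖auxCf (f t) k‖ ≤ M := by
  obtain ⟨M, hM⟩ := (isCompact_Icc (a := -T) (b := T)).prod (isCompact_Icc (a := 0) (b := 2 * π))
    |>.exists_bound_of_continuousOn h.smooth.continuous.continuousOn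
  have hb : ∀ t, ∀ φ ∈ Set.Icc 0 (2 * π), ‖f t φ‖ ≤ max M 0 := by
    intro t φ hφ
    by_cases ht : T < |t|
    · rw [h.supp t φ ht]; simp
    · exact (hM (t, φ) ⟨abs_le.1 (not_lt.1 ht), hφ⟩).trans (le_max_left _ _)
  refine ⟨max M 0, le_max_right _ _, fun t k => ?_⟩
  unfold auxCf
  rw [norm_mul, Complex.norm_real, Real.norm_of_nonneg (by positivity)]
  have := intervalIntegral.norm_integral_le_of_norm_le_const (a := 0) (b := 2 * π) (C := max M 0)
    (f := fun φ : ℝ => f t φ * Complex.exp (Complex.I * ((k : ℝ) * φ))) (by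
      intro φ hφ
      rw [Set.uIoc_of_le (by positivity)] at hφ
      rw [norm_mul, aux_norm_exp, mul_one]
      exact hb t φ (Set.Ioc_subset_Icc_self hφ))
  rw [sub_zero, abs_of_pos (by positivity)] at this
  calc _ ≤ (2 * π)⁻¹ * (max M 0 * (2 * π)) := by gcongr
    _ = _ := by field_simp

lemma AuxGood.cf_decay {T : ℝ} {f : ℝ → ℝ → ℂ} (h : AuxGood T f) :
    ∃ M : ℝ, 0 ≤ M ∧ ∀ t (k : ℤ), k ≠ 0 → ‖auxCf (f t) k‖ ≤ M / |(k : ℝ)| ^ 3 := by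
  obtain ⟨M, hM0, hM⟩ := h.D.D.D.cf_bound
  refine ⟨M, hM0, fun t k hk => ?_⟩
  have := hM t k
  rw [h.D.D.cf_D, h.D.cf_D, h.cf_D] at this
  simp only [norm_mul, norm_neg, Complex.norm_I, Complex.norm_real, Real.norm_eq_abs, one_mul] at this
  have hk' : 0 < |(k : ℝ)| := by positivity
  rw [le_div_iff₀ (by positivity)]
  linarith

lemma AuxGood.cf_cont {T : ℝ} {f : ℝ → ℝ → ℂ} (h : AuxGood T f) (k : ℤ) :
    Continuous fun t => auxCf (f t) k := by
  unfold auxCf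
  refine continuous_const.mul ?_
  refine intervalIntegral.continuous_parametric_intervalIntegral_of_continuous' ?_ _ _
  have := h.smooth.continuous
  exact this.mul (by fun_prop)

lemma aux_filter_meas (ζ : ℝ → ℝ) (lam : ℝ) (hK : Continuous (lowPassKernel ζ lam))
    (g : ℝ → ℂ) (hg : Continuous g) : Measurable (lowPassFilter ζ lam g) := by
  unfold lowPassFilter
  have : Continuous (fun p : ℝ × ℝ => lowPassKernel ζ lam (p.1 - p.2) * g p.2) := by fun_prop
  exact (this.stronglyMeasurable.integral_prod_right (ν := volume)).measurable

lemma aux_filter_bound (ζ : ℝ → ℝ) (C lam : ℝ) (hC : 0 < C) (hl : 0 < lam)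
    (hK : ∀ t, ‖lowPassKernel ζ lam t‖ ≤ C * (lam * (1 + (lam * t) ^ 2)⁻¹))
    (g : ℝ → ℂ) (m : ℝ) (hm : 0 ≤ m) (hg : ∀ s, ‖g s‖ ≤ m) (t : ℝ) :
    ‖lowPassFilter ζ lam g t‖ ≤ C * π * m := by
  rw [← ENNReal.ofReal_le_ofReal_iff (by positivity), ofReal_norm]
  refine (aux_filter_le ζ C lam hK g t).trans ?_
  calc _ ≤ ∫⁻ s, auxKap C lam (t - s) * ENNReal.ofReal m := by
        gcongr with s
        rw [← ofReal_norm]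
        exact ENNReal.ofReal_le_ofReal (hg s)
    _ = _ := by
        rw [lintegral_mul_const, auxKap_lintegral_shift C lam t hC hl,
          ← ENNReal.ofReal_mul (by positivity)]
        exact (auxKap_meas C lam).comp (measurable_const.sub measurable_id)

/-- The derivative of the low-frequency part. -/
lemma aux_low_deriv (ζ : ℝ → ℝ) (C ω₀ : ℝ) (hC : 0 < C) (hω : 0 < ω₀)
    (hK : ∀ lam t : ℝ, 0 < lam → ‖lowPassKernel ζ lam t‖ ≤ C * (lam * (1 + (lam * t) ^ 2)⁻¹))
    {T : ℝ} {f : ℝ → ℝ → ℂ} (h : AuxGood T f) (t : ℝ) :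
    Summable (fun k : ℤ => ‖-(Complex.I * (k : ℝ)) *
        lowPassFilter ζ (ω₀ * |(k : ℝ)|) (fun s => auxCf (f s) k) t‖) ∧
    ∀ φ : ℝ, deriv (fun φ' : ℝ => ∑' k : {k : ℤ // k ≠ 0},
      Complex.exp (-(Complex.I * ((k.1 : ℝ) * φ'))) *
        lowPassFilter ζ (ω₀ * |(k.1 : ℝ)|) (fun s => auxCf (f s) k.1) t) φ =
      ∑' k : ℤ, Complex.exp (-(Complex.I * ((k : ℝ) * φ))) * (-(Complex.I * (k : ℝ)) *
        lowPassFilter ζ (ω₀ * |(k : ℝ)|) (fun s => auxCf (f s) k) t) := by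
  obtain ⟨M, hM0, hM⟩ := h.cf_decay
  set F : ℤ → ℂ := fun k => lowPassFilter ζ (ω₀ * |(k : ℝ)|) (fun s => auxCf (f s) k) t with hF
  have hb : ∀ k : ℤ, k ≠ 0 → ‖F k‖ ≤ C * π * (M / |(k : ℝ)| ^ 3) := by
    intro k hk
    have hk' : 0 < |(k : ℝ)| := by positivity
    exact aux_filter_bound ζ C _ hC (by positivity) (fun t => hK _ t (by positivity)) _ _
      (by positivity) (fun s => hM s k hk) t
  have hb1 : ∀ k : ℤ, ‖-(Complex.I * (k : ℝ)) * F k‖ ≤ C * π * M * (1 / (k : ℝ) ^ 2) := by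
    intro k
    by_cases hk : k = 0
    · subst hk; simp
    have hk' : 0 < |(k : ℝ)| := by positivity
    simp only [norm_mul, norm_neg, Complex.norm_I, Complex.norm_real, Real.norm_eq_abs, one_mul]
    calc _ ≤ |(k : ℝ)| * (C * π * (M / |(k : ℝ)| ^ 3)) := by gcongr; exact hb k hk
      _ = C * π * M * (1 / |(k : ℝ)| ^ 2) := by field_simp
      _ = _ := by rw [sq_abs]
  have hs2 : Summable fun k : ℤ => C * π * M * (1 / (k : ℝ) ^ 2) :=
    (Real.summable_one_div_int_pow.2 (by norm_num)).mul_left _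
  have hS : Summable (fun k : ℤ => ‖-(Complex.I * (k : ℝ)) * F k‖) :=
    Summable.of_nonneg_of_le (fun _ => norm_nonneg _) hb1 hs2
  refine ⟨hS, fun φ => ?_⟩
  have hS' : Summable (fun k : {k : ℤ // k ≠ 0} => ‖-(Complex.I * (k.1 : ℝ)) * F k.1‖) :=
    hS.comp_injective Subtype.val_injective
  have hder := hasDerivAt_tsum (𝕜 := ℝ)
    (g := fun (k : {k : ℤ // k ≠ 0}) (φ' : ℝ) => Complex.exp (-(Complex.I * ((k.1 : ℝ) * φ'))) * F k.1)
    (g' := fun (k : {k : ℤ // k ≠ 0}) (φ' : ℝ) => Complex.exp (-(Complex.I * ((k.1 : ℝ) * φ'))) *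
      (-(Complex.I * (k.1 : ℝ)) * F k.1)) (y₀ := 0) hS'
    (by
      intro k y
      have h0 : HasDerivAt (fun z : ℝ => -(Complex.I * ((k.1 : ℝ) * (z : ℂ))))
          (-(Complex.I * ((k.1 : ℝ) * 1))) y :=
        (((Complex.ofRealCLM.hasDerivAt (x := y)).const_mul _).const_mul _).neg
      have := h0.cexp.mul_const (F k.1)
      rw [mul_one, mul_assoc] at this
      exact this)
    (by
      intro k y
      rw [norm_mul, aux_norm_exp_neg, one_mul])
    (by
      refine Summable.of_norm (Summable.of_nonneg_of_le (fun _ => norm_nonneg _) ?_ hS')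
      intro k
      rw [norm_mul, aux_norm_exp_neg, one_mul, norm_mul]
      refine le_mul_of_one_le_left (norm_nonneg _) ?_
      simp only [norm_mul, norm_neg, Complex.norm_I, Complex.norm_real, Real.norm_eq_abs, one_mul]
      exact_mod_cast Int.one_le_abs k.2) φ
  rw [hder.deriv]
  refine tsum_subtype_eq_of_support_subset (f := fun k : ℤ =>
    Complex.exp (-(Complex.I * ((k : ℝ) * φ))) * (-(Complex.I * (k : ℝ)) * F k))
    (s := {k : ℤ | k ≠ 0}) ?_
  intro k hk hk0
  apply hk
  simp [hk0]

lemma aux_mode (ζ : ℝ → ℝ) (C ω₀ : ℝ) (hC : 0 < C) (hω : 0 < ω₀) (hω1 : ω₀ ≤ 1)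
    (hK : ∀ lam t : ℝ, 0 < lam → ‖lowPassKernel ζ lam t‖ ≤ C * (lam * (1 + (lam * t) ^ 2)⁻¹))
    {T : ℝ} {f : ℝ → ℝ → ℂ} (h : AuxGood T f) (τ : ℝ) (k : ℤ) :
    ∫⁻ t in Set.Icc (τ - 1) τ, ‖-(Complex.I * (k : ℝ)) *
        lowPassFilter ζ (ω₀ * |(k : ℝ)|) (fun s => auxCf (f s) k) t‖ₑ ^ 2 ≤
      ∑' n : ℤ, ENNReal.ofReal (C * π) * ENNReal.ofReal (8 * C / ω₀ * (1 + (n : ℝ) ^ 2)⁻¹) *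
        ∫⁻ s in Set.Icc (τ + n - 1) (τ + n), ‖auxCf (auxD f s) k‖ₑ ^ 2 := by
  by_cases hk : k = 0
  · subst hk; simp
  have hk1 : 1 ≤ |(k : ℝ)| := by exact_mod_cast Int.one_le_abs hk
  have hl : ω₀ ≤ ω₀ * |(k : ℝ)| := by nlinarith
  set lam := ω₀ * |(k : ℝ)| with hlam
  have hl0 : 0 < lam := by linarith
  have hdm : Measurable fun s => ‖auxCf (auxD f s) k‖ₑ ^ 2 :=
    (h.D.cf_cont k).measurable.enorm.pow_const 2
  have h1 : ∀ t, ‖-(Complex.I * (k : ℝ)) *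
        lowPassFilter ζ lam (fun s => auxCf (f s) k) t‖ₑ ^ 2 ≤
      ENNReal.ofReal (C * π) * ∫⁻ s, auxKap C lam (t - s) * ‖auxCf (auxD f s) k‖ₑ ^ 2 := by
    intro t
    rw [enorm_mul, mul_pow]
    calc _ ≤ ‖-(Complex.I * (k : ℝ))‖ₑ ^ 2 * (ENNReal.ofReal (C * π) *
          ∫⁻ s, auxKap C lam (t - s) * ‖auxCf (f s) k‖ₑ ^ 2) := by
          gcongr
          exact aux_cs ζ C lam hC hl0 (fun t => hK _ t hl0) _ (h.cf_cont k).measurable t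
      _ = _ := by
          rw [mul_left_comm, ← lintegral_const_mul' _ _ (by finiteness)]
          congr 1
          refine lintegral_congr fun s => ?_
          rw [h.cf_D, enorm_mul, mul_pow]
          ring
  have hkm : Measurable fun p : ℝ × ℝ => auxKap C lam (p.1 - p.2) * ‖auxCf (auxD f p.2) k‖ₑ ^ 2 :=
    ((auxKap_meas C lam).comp (measurable_fst.sub measurable_snd)).mul (hdm.comp measurable_snd)
  calc _ ≤ ∫⁻ t in Set.Icc (τ - 1) τ, ENNReal.ofReal (C * π) *
        ∫⁻ s, auxKap C lam (t - s) * ‖auxCf (auxD f s) k‖ₑ ^ 2 := lintegral_mono h1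
    _ = ENNReal.ofReal (C * π) * ∫⁻ s, ∫⁻ t in Set.Icc (τ - 1) τ,
          auxKap C lam (t - s) * ‖auxCf (auxD f s) k‖ₑ ^ 2 := by
        rw [lintegral_const_mul' _ _ (by finiteness), lintegral_lintegral_swap]
        exact hkm.aemeasurable
    _ = ENNReal.ofReal (C * π) * ∫⁻ s in (⋃ n : ℤ, Set.Icc (τ + n - 1) (τ + n)),
          ∫⁻ t in Set.Icc (τ - 1) τ,
          auxKap C lam (t - s) * ‖auxCf (auxD f s) k‖ₑ ^ 2 := by
        have : (⋃ n : ℤ, Set.Icc (τ + n - 1) (τ + n)) = Set.univ := by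
          refine Set.eq_univ_of_forall fun s => Set.mem_iUnion.2 ⟨⌈s - τ⌉, ?_, ?_⟩
          · linarith [Int.ceil_lt_add_one (s - τ)]
          · linarith [Int.le_ceil (s - τ)]
        rw [this, Measure.restrict_univ]
    _ ≤ ENNReal.ofReal (C * π) * ∑' n : ℤ, ∫⁻ s in Set.Icc (τ + n - 1) (τ + n),
          ∫⁻ t in Set.Icc (τ - 1) τ,
          auxKap C lam (t - s) * ‖auxCf (auxD f s) k‖ₑ ^ 2 := by
        gcongr
        exact lintegral_iUnion_le _ _
    _ ≤ ENNReal.ofReal (C * π) * ∑' n : ℤ, ∫⁻ s in Set.Icc (τ + n - 1) (τ + n),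
          ENNReal.ofReal (8 * C / ω₀ * (1 + (n : ℝ) ^ 2)⁻¹) * ‖auxCf (auxD f s) k‖ₑ ^ 2 := by
        refine mul_le_mul' le_rfl (ENNReal.tsum_le_tsum fun n => ?_)
        refine setLIntegral_mono' (measurableSet_Icc (a := τ + (n : ℝ) - 1) (b := τ + n)) fun s hs => ?_
        rw [lintegral_mul_const' _ _ (by finiteness)]
        gcongr
        exact aux_window C lam ω₀ τ s n hC hω hω1 hl hs
    _ = _ := by
        rw [← ENNReal.tsum_mul_left]
        refine tsum_congr fun n => ?_
        rw [lintegral_const_mul' _ _ (by finiteness), mul_assoc]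

lemma aux_per_x (ζ : ℝ → ℝ) (C ω₀ : ℝ) (hC : 0 < C) (hω : 0 < ω₀) (hω1 : ω₀ ≤ 1)
    (hK : ∀ lam t : ℝ, 0 < lam → ‖lowPassKernel ζ lam t‖ ≤ C * (lam * (1 + (lam * t) ^ 2)⁻¹))
    (hKc : ∀ lam, Continuous (lowPassKernel ζ lam))
    {T : ℝ} {f : ℝ → ℝ → ℂ} (h : AuxGood T f) (τ : ℝ) :
    ∫⁻ φ in Set.Icc 0 (2 * π), ∫⁻ t in Set.Icc (τ - 1) τ,
      ‖deriv (fun φ' : ℝ => ∑' k : {k : ℤ // k ≠ 0},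
      Complex.exp (-(Complex.I * ((k.1 : ℝ) * φ'))) *
        lowPassFilter ζ (ω₀ * |(k.1 : ℝ)|) (fun s => auxCf (f s) k.1) t) φ‖ₑ ^ 2 ≤
      ∑' n : ℤ, ENNReal.ofReal (C * π) * ENNReal.ofReal (8 * C / ω₀ * (1 + (n : ℝ) ^ 2)⁻¹) *
        ∫⁻ φ in Set.Icc 0 (2 * π), ∫⁻ t in Set.Icc (τ + n - 1) (τ + n), ‖auxD f t φ‖ₑ ^ 2 := by
  set c : ℤ → ℝ → ℂ := fun k t => -(Complex.I * (k : ℝ)) *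
        lowPassFilter ζ (ω₀ * |(k : ℝ)|) (fun s => auxCf (f s) k) t with hc
  have hcm : ∀ k, Measurable (c k) := fun k =>
    (aux_filter_meas ζ _ (hKc _) _ (h.cf_cont k)).const_mul _
  have hcs : ∀ t, Summable fun k => ‖c k t‖ := fun t => (aux_low_deriv ζ C ω₀ hC hω hK h t).1
  have hcd : ∀ t φ, deriv (fun φ' : ℝ => ∑' k : {k : ℤ // k ≠ 0},
      Complex.exp (-(Complex.I * ((k.1 : ℝ) * φ'))) *
        lowPassFilter ζ (ω₀ * |(k.1 : ℝ)|) (fun s => auxCf (f s) k.1) t) φ =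
      ∑' k : ℤ, Complex.exp (-(Complex.I * ((k : ℝ) * φ))) * c k t :=
    fun t φ => (aux_low_deriv ζ C ω₀ hC hω hK h t).2 φ
  simp_rw [hcd]
  have hGm : Measurable fun p : ℝ × ℝ =>
      ∑' k : ℤ, Complex.exp (-(Complex.I * ((k : ℝ) * p.1))) * c k p.2 := by
    refine measurable_of_tendsto_metrizable' (Filter.atTop : Filter (Finset ℤ))
      (f := fun (S : Finset ℤ) (p : ℝ × ℝ) => ∑ k ∈ S, Complex.exp (-(Complex.I * ((k : ℝ) * p.1))) * c k p.2) ?_ ?_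
    · intro S
      refine Finset.measurable_sum S fun k _ => ?_
      refine Measurable.mul (Continuous.measurable (by fun_prop)) ((hcm k).comp measurable_snd)
    · rw [tendsto_pi_nhds]
      intro p
      refine Summable.hasSum (Summable.of_norm ?_)
      simpa only [norm_mul, aux_norm_exp_neg, one_mul] using hcs p.2
  have hdm : ∀ k, Measurable fun s => ‖auxCf (auxD f s) k‖ₑ ^ 2 := fun k =>
    (h.D.cf_cont k).measurable.enorm.pow_const 2
  rw [lintegral_lintegral_swap (hGm.enorm.pow_const 2).aemeasurable]
  have hpars : ∀ t, ∫⁻ φ in Set.Icc 0 (2 * π),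
      ‖∑' k : ℤ, Complex.exp (-(Complex.I * ((k : ℝ) * φ))) * c k t‖ₑ ^ 2 =
      ENNReal.ofReal (2 * π) * ∑' k : ℤ, ‖c k t‖ₑ ^ 2 := by
    intro t
    rw [auxCf_parseval _ (auxCf_series_cont (fun k => c k t) (hcs t))]
    simp_rw [auxCf_series (fun k => c k t) (hcs t)]
  simp_rw [hpars]
  rw [lintegral_const_mul' _ _ (by finiteness),
    lintegral_tsum fun k => ((hcm k).enorm.pow_const 2).aemeasurable]
  calc _ ≤ ENNReal.ofReal (2 * π) * ∑' k : ℤ, ∑' n : ℤ,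
        ENNReal.ofReal (C * π) * ENNReal.ofReal (8 * C / ω₀ * (1 + (n : ℝ) ^ 2)⁻¹) *
        ∫⁻ s in Set.Icc (τ + n - 1) (τ + n), ‖auxCf (auxD f s) k‖ₑ ^ 2 := by
        gcongr with k
        exact aux_mode ζ C ω₀ hC hω hω1 hK h τ k
    _ = _ := by
        rw [ENNReal.tsum_comm, ← ENNReal.tsum_mul_left]
        refine tsum_congr fun n => ?_
        rw [ENNReal.tsum_mul_left, mul_left_comm,
          ← lintegral_tsum fun k => (hdm k).aemeasurable,
          ← lintegral_const_mul' _ _ (by finiteness)]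
        congr 1
        have hcont : Continuous fun p : ℝ × ℝ => auxD f p.2 p.1 :=
          h.D.smooth.continuous.comp continuous_swap
        rw [lintegral_lintegral_swap (hcont.measurable.enorm.pow_const 2).aemeasurable]
        refine lintegral_congr fun s => ?_
        rw [auxCf_parseval _ (h.D.cont s)]

lemma aux_summable : Summable fun n : ℤ => (1 + (n : ℝ) ^ 2)⁻¹ := by
  have h := (Real.summable_one_div_int_pow (p := 2)).2 (by norm_num)
  refine Summable.of_norm_bounded_eventually h ?_
  rw [Filter.eventually_cofinite]
  refine (Set.finite_singleton (0 : ℤ)).subset fun n hn => ?_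
  by_contra h0
  apply hn
  have : (0 : ℝ) < (n : ℝ) ^ 2 := by
    have : (n : ℝ) ≠ 0 := by exact_mod_cast h0
    positivity
  rw [Real.norm_of_nonneg (by positivity), one_div]
  gcongr
  linarith

lemma aux_meas_deriv {X : Type} [MeasurableSpace X] (Ψ : ℝ → ℝ → X → ℝ)
    (hm : Measurable (fun p : ℝ × ℝ × X => Ψ p.1 p.2.1 p.2.2))
    (hs : ∀ x, ContDiff ℝ (⊤ : ℕ∞) fun p : ℝ × ℝ => Ψ p.1 p.2 x) :
    Measurable fun p : ℝ × ℝ × X => deriv (fun φ' => Ψ p.1 φ' p.2.2) p.2.1 := by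
  refine measurable_of_tendsto_metrizable (f := fun (n : ℕ) (p : ℝ × ℝ × X) =>
    (1 / ((n : ℝ) + 1))⁻¹ • (Ψ p.1 (p.2.1 + 1 / ((n : ℝ) + 1)) p.2.2 - Ψ p.1 p.2.1 p.2.2)) ?_ ?_
  · intro n
    refine Measurable.const_smul (M := ℝ) (Measurable.sub ?_ hm) _
    exact hm.comp (by fun_prop : Measurable fun p : ℝ × ℝ × X =>
      (p.1, p.2.1 + 1 / ((n : ℝ) + 1), p.2.2))
  · rw [tendsto_pi_nhds]
    rintro ⟨t, φ, x⟩
    have h1 : ContDiff ℝ (⊤ : ℕ∞) (fun φ' => Ψ t φ' x) :=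
      (hs x).comp (contDiff_const.prodMk contDiff_id : ContDiff ℝ _ fun φ : ℝ => (t, φ))
    have h2 := (h1.differentiable (by simp) φ).hasDerivAt
    rw [hasDerivAt_iff_tendsto_slope_zero] at h2
    refine h2.comp (tendsto_nhdsWithin_iff.2 ⟨tendsto_one_div_add_atTop_nhds_zero_nat, ?_⟩)
    exact Filter.Eventually.of_forall fun n => by
      have : (0 : ℝ) < 1 / ((n : ℝ) + 1) := by positivity
      exact this.ne'

lemma aux_meas_int {X : Type} [MeasurableSpace X] (g : ℝ × ℝ × X → ℝ≥0∞) (hg : Measurable g)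
    (a b : Measure ℝ) [SFinite a] [SFinite b] :
    Measurable fun x => ∫⁻ φ, ∫⁻ t, g (t, φ, x) ∂b ∂a := by
  have h3 : Measurable fun q : (X × ℝ) × ℝ => g (q.2, q.1.2, q.1.1) :=
    hg.comp (by fun_prop)
  exact (h3.lintegral_prod_right' (ν := b)).lintegral_prod_right'

/-- There is `B > 0` (depending only on `ζ`) such that if `ω₀ ≤ 1`, then for every admissible
`Ψ` and every `τ̄ ∈ ℝ`:
`∫_X∫₀^{2π}∫_{τ̄−1}^{τ̄} (∂_φ Ψ_♭)² ≤ B ω₀⁻¹ sup_{τ̃} ∫_X∫₀^{2π}∫_{τ̃−1}^{τ̃} (∂_φ Ψ)²`. -/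
theorem angular_derivative_window_bound_lowPart
    (ζ : ℝ → ℝ) (hζ_smooth : ContDiff ℝ (⊤ : ℕ∞) ζ) (hζ_even : ∀ x, ζ (-x) = ζ x)
    (hζ_supp : Function.support ζ ⊆ Set.Icc (-2) 2)
    (hζ_one : ∀ x ∈ Set.Icc (-1 : ℝ) 1, ζ x = 1) :
    ∃ B : ℝ, 0 < B ∧
      ∀ (X : Type) (_ : MeasurableSpace X) (μ : Measure X), SigmaFinite μ →
      ∀ ω₀ : ℝ, 0 < ω₀ → ω₀ ≤ 1 →
      ∀ Ψ : ℝ → ℝ → X → ℝ,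
        -- admissibility: joint measurability
        Measurable (fun p : ℝ × ℝ × X => Ψ p.1 p.2.1 p.2.2) →
        -- admissibility: smoothness in (t, φ) for each fixed x
        (∀ x, ContDiff ℝ (⊤ : ℕ∞) fun p : ℝ × ℝ => Ψ p.1 p.2 x) →
        -- admissibility: 2π-periodicity in φ
        (∀ t φ x, Ψ t (φ + 2 * Real.pi) x = Ψ t φ x) →
        -- admissibility: compact support in t
        (∃ T : ℝ, ∀ t φ x, T < |t| → Ψ t φ x = 0) →
        -- admissibility: the integrals appearing in the statement are finite
        (∀ τ₁ τ₂ : ℝ,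
          (∫⁻ x, (∫⁻ φ in Set.Icc 0 (2 * Real.pi), (∫⁻ t in Set.Icc τ₁ τ₂,
            (‖deriv (fun φ' => lowPart ζ ω₀ Ψ t φ' x) φ‖₊ : ℝ≥0∞) ^ 2)) ∂μ) < ⊤) →
        (∀ τ₁ τ₂ : ℝ,
          (∫⁻ x, (∫⁻ φ in Set.Icc 0 (2 * Real.pi), (∫⁻ t in Set.Icc τ₁ τ₂,
            (‖deriv (fun φ' => Ψ t φ' x) φ‖₊ : ℝ≥0∞) ^ 2)) ∂μ) < ⊤) →
      ∀ τbar : ℝ,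
        (∫⁻ x, (∫⁻ φ in Set.Icc 0 (2 * Real.pi), (∫⁻ t in Set.Icc (τbar - 1) τbar,
            (‖deriv (fun φ' => lowPart ζ ω₀ Ψ t φ' x) φ‖₊ : ℝ≥0∞) ^ 2)) ∂μ)
          ≤ ENNReal.ofReal (B / ω₀) *
              ⨆ τtil : ℝ, ∫⁻ x, (∫⁻ φ in Set.Icc 0 (2 * Real.pi),
                (∫⁻ t in Set.Icc (τtil - 1) τtil,
                  (‖deriv (fun φ' => Ψ t φ' x) φ‖₊ : ℝ≥0∞) ^ 2)) ∂μ := by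
  obtain ⟨C, hC, hK⟩ := aux_kernel_bound ζ hζ_smooth hζ_supp
  have hKc := aux_kernel_cont ζ hζ_smooth hζ_supp
  set S : ℝ := ∑' n : ℤ, (1 + (n : ℝ) ^ 2)⁻¹ with hSdef
  have hS0 : 0 < S := aux_summable.tsum_pos (fun n => by positivity) 0 (by positivity)
  refine ⟨C * π * (8 * C) * S, by positivity, ?_⟩
  intro X mX μ _ ω₀ hω hω1 Ψ hm hs hper hT _ _ τ
  obtain ⟨T, hT⟩ := hT
  have hG : ∀ x, AuxGood T (fun t φ => (Ψ t φ x : ℂ)) := fun x =>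
    ⟨Complex.ofRealCLM.contDiff.comp (hs x), fun t φ => by simp only [hper], fun t φ ht => by
      simp only [hT t φ x ht, Complex.ofReal_zero]⟩
  have hD : ∀ t φ x, ‖auxD (fun t φ => (Ψ t φ x : ℂ)) t φ‖ₑ =
      ‖deriv (fun φ' => Ψ t φ' x) φ‖ₑ := by
    intro t φ x
    have h1 : ContDiff ℝ (⊤ : ℕ∞) (fun φ' => Ψ t φ' x) :=
      (hs x).comp (contDiff_const.prodMk contDiff_id : ContDiff ℝ _ fun φ : ℝ => (t, φ))
    have h2 := (h1.differentiable (by simp) φ).hasDerivAt.ofReal_comp.deriv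
    rw [auxD, h2, ← ofReal_norm, Complex.norm_real, ofReal_norm]
  simp only [← enorm_eq_nnnorm]
  set J : ℝ → X → ℝ≥0∞ := fun τ' x => ∫⁻ φ in Set.Icc 0 (2 * π), ∫⁻ t in Set.Icc (τ' - 1) τ',
    ‖deriv (fun φ' => Ψ t φ' x) φ‖ₑ ^ 2 with hJ
  have hJm : ∀ τ', Measurable (J τ') := by
    intro τ'
    have hd := (aux_meas_deriv Ψ hm hs).enorm.pow_const 2
    exact aux_meas_int _ hd _ _
  have hx : ∀ x, ∫⁻ φ in Set.Icc 0 (2 * π), ∫⁻ t in Set.Icc (τ - 1) τ,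
      ‖deriv (fun φ' => lowPart ζ ω₀ Ψ t φ' x) φ‖ₑ ^ 2 ≤
      ∑' n : ℤ, ENNReal.ofReal (C * π) * ENNReal.ofReal (8 * C / ω₀ * (1 + (n : ℝ) ^ 2)⁻¹) *
        J (τ + n) x := by
    intro x
    have := aux_per_x ζ C ω₀ hC hω hω1 hK hKc (hG x) τ
    simp only [hD] at this
    have hlp : ∀ t, (fun φ' : ℝ => lowPart ζ ω₀ Ψ t φ' x) = fun φ' : ℝ => ∑' k : {k : ℤ // k ≠ 0},
      Complex.exp (-(Complex.I * ((k.1 : ℝ) * φ'))) *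
        lowPassFilter ζ (ω₀ * |(k.1 : ℝ)|)
          (fun s => auxCf ((fun t φ => (Ψ t φ x : ℂ)) s) k.1) t := fun t => rfl
    simp only [hlp]
    exact this
  calc _ ≤ ∫⁻ x, ∑' n : ℤ, ENNReal.ofReal (C * π) *
        ENNReal.ofReal (8 * C / ω₀ * (1 + (n : ℝ) ^ 2)⁻¹) * J (τ + n) x ∂μ := lintegral_mono hx
    _ = ∑' n : ℤ, ENNReal.ofReal (C * π) *
        ENNReal.ofReal (8 * C / ω₀ * (1 + (n : ℝ) ^ 2)⁻¹) * ∫⁻ x, J (τ + n) x ∂μ := by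
        rw [lintegral_tsum fun n => ((hJm _).const_mul _).aemeasurable]
        refine tsum_congr fun n => ?_
        rw [lintegral_const_mul _ (hJm _)]
    _ ≤ ∑' n : ℤ, ENNReal.ofReal (C * π) *
        ENNReal.ofReal (8 * C / ω₀ * (1 + (n : ℝ) ^ 2)⁻¹) * ⨆ τ', ∫⁻ x, J τ' x ∂μ := by
        gcongr with n
        exact le_iSup (fun τ' => ∫⁻ x, J τ' x ∂μ) (τ + n)
    _ = _ := by
        rw [ENNReal.tsum_mul_right]
        congr 1
        rw [ENNReal.tsum_mul_left, ← ENNReal.ofReal_tsum_of_nonneg (fun n => by positivity)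
          (aux_summable.mul_left _), tsum_mul_left, ← ENNReal.ofReal_mul (by positivity)]
        congr 1
        rw [← hSdef]
        ring
end

section
/- For every real q > 0 there exists a constant B > 0, depending only on q, with the following property. Let λ > 0 and let f : ℝ → ℂ be a Schwartz function whose Fourier transform f̂ vanishes on the interval (−λ, λ). Then for every t ∈ ℝ, |f(t)| ≤ B ∫_ℝ (1 + |log(λ|t−s|)|) (1 + λ|t−s|)^{-q} |f'(s)| ds. -/
open MeasureTheory Real

/-- Weighted integrability of a Schwartz function. -/
lemma schwartz_weight_integrable (φ : SchwartzMap ℝ ℂ) (q : ℝ) :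
    Integrable (fun v : ℝ => (1 + |v|) ^ q * ‖φ v‖) := by
  obtain ⟨n, hn⟩ := exists_nat_ge q
  have h0 := (φ.integrable_pow_mul volume 0)
  have hk := (φ.integrable_pow_mul volume n)
  have hs := (h0.add hk).const_mul ((2 : ℝ) ^ (n - 1))
  refine hs.mono' ?_ (Filter.Eventually.of_forall fun v => ?_)
  · apply Continuous.aestronglyMeasurable
    refine Continuous.mul ?_ φ.continuous.norm
    refine Continuous.rpow_const (by fun_prop) fun x => Or.inl ?_
    positivity
  · have h1 : (1 + |v|) ^ q ≤ (1 + |v|) ^ n := by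
      rw [← Real.rpow_natCast]
      exact Real.rpow_le_rpow_of_exponent_le (by linarith [abs_nonneg v]) hn
    have h2 := add_pow_le (zero_le_one (α := ℝ)) (abs_nonneg v) n
    rw [Real.norm_of_nonneg (by positivity)]
    calc _ ≤ (2 ^ (n - 1) * (1 ^ n + |v| ^ n)) * ‖φ v‖ :=
          mul_le_mul_of_nonneg_right (h1.trans h2) (norm_nonneg _)
      _ = _ := by simp [Real.norm_eq_abs]; ring

/-- Tail estimate. -/
lemma tail_bound {φ : ℝ → ℂ} {q : ℝ} (hq : 0 < q)
    (hw : Integrable (fun v : ℝ => (1 + |v|) ^ q * ‖φ v‖)) (S : Set ℝ) (hS : MeasurableSet S)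
    (u : ℝ) (hu : ∀ v ∈ S, |u| ≤ |v|) :
    ‖∫ v in S, φ v‖ ≤ (∫ v, (1 + |v|) ^ q * ‖φ v‖) * (1 + |u|) ^ (-q) := by
  have hpos : 0 < 1 + |u| := by positivity
  have h1 : ∫ v in S, (1 + |v|) ^ q * ‖φ v‖ ≤ ∫ v, (1 + |v|) ^ q * ‖φ v‖ :=
    setIntegral_le_integral hw (Filter.Eventually.of_forall fun v => by positivity)
  have h2 : ‖∫ v in S, φ v‖ ≤ ∫ v in S, ((1 + |v|) ^ q * ‖φ v‖) * (1 + |u|) ^ (-q) := by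
    refine norm_integral_le_of_norm_le (hw.integrableOn.mul_const _) ?_
    refine (ae_restrict_iff' hS).2 (Filter.Eventually.of_forall fun v hv => ?_)
    have h3 : (1 + |u|) ^ q ≤ (1 + |v|) ^ q :=
      Real.rpow_le_rpow hpos.le (by linarith [hu v hv]) hq.le
    have h4 : (1 + |u|) ^ q * (1 + |u|) ^ (-q) = 1 := by
      rw [← Real.rpow_add hpos]; simp
    calc ‖φ v‖ = ((1 + |u|) ^ q * ‖φ v‖) * (1 + |u|) ^ (-q) := by
          rw [mul_right_comm, h4, one_mul]
      _ ≤ _ := by gcongr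
  rw [integral_mul_const] at h2
  exact h2.trans (mul_le_mul_of_nonneg_right h1 (by positivity))

/-- Core representation estimate by integration by parts on the two half-lines. -/
lemma core_bound {φ h h' : ℝ → ℂ} {q M : ℝ} (hq : 0 < q) (hφc : Continuous φ)
    (hφ : Integrable φ) (hφ1 : ∫ v, φ v = 1)
    (hw : Integrable (fun v : ℝ => (1 + |v|) ^ q * ‖φ v‖))
    (hd : ∀ x, HasDerivAt h (h' x) x) (hM : ∀ x, ‖h x‖ ≤ M)
    (hi : Integrable h') (h0 : ∫ v, h v * φ v = 0) :
    ‖h 0‖ ≤ (∫ v, (1 + |v|) ^ q * ‖φ v‖) * ∫ u, (1 + |u|) ^ (-q) * ‖h' u‖ := by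
  set C := ∫ v, (1 + |v|) ^ q * ‖φ v‖ with hC
  have hC0 : 0 ≤ C := integral_nonneg fun v => by positivity
  have hcont : Continuous h := continuous_iff_continuousAt.2 fun x => (hd x).continuousAt
  set a := ∫ v in Set.Ioi 0, φ v with ha
  set b := ∫ v in Set.Iic 0, φ v with hb
  have hab : b + a = 1 := by
    rw [← hφ1]; exact intervalIntegral.integral_Iic_add_Ioi hφ.integrableOn hφ.integrableOn
  let P : ℝ → ℂ := fun u => ∫ v in (0:ℝ)..u, φ v
  have hP : ∀ x, HasDerivAt P (φ x) x := fun x =>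
    intervalIntegral.integral_hasDerivAt_right (hφc.intervalIntegrable _ _)
      (hφc.stronglyMeasurableAtFilter _ _) hφc.continuousAt
  have hPc : Continuous P := continuous_iff_continuousAt.2 fun x => (hP x).continuousAt
  have hP0 : P 0 = 0 := by simp [P]
  have hPa : ∀ u, P u - a = - ∫ v in Set.Ioi u, φ v := by
    intro u
    have := intervalIntegral.integral_interval_add_Ioi (a := 0) (b := u)
      (hφ.integrableOn (s := Set.Ioi 0)) (hφ.integrableOn (s := Set.Ioi u))
    rw [ha, ← this]; simp [P]
  have hPb : ∀ u, P u + b = ∫ v in Set.Iic u, φ v := by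
    intro u
    have := intervalIntegral.integral_Iic_sub_Iic (a := 0) (b := u) (μ := volume) (f := φ)
      hφ.integrableOn hφ.integrableOn
    rw [hb]; simp only [P]; rw [← this]; ring
  have hv1 : ∀ u, 0 ≤ u → ‖P u - a‖ ≤ C * (1 + |u|) ^ (-q) := by
    intro u hu
    rw [hPa, norm_neg]
    refine tail_bound hq hw _ measurableSet_Ioi u fun v hv => ?_
    rw [abs_of_nonneg hu, abs_of_nonneg (hu.trans (le_of_lt hv))]; exact le_of_lt hv
  have hv2 : ∀ u, u ≤ 0 → ‖P u + b‖ ≤ C * (1 + |u|) ^ (-q) := by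
    intro u hu
    rw [hPb]
    refine tail_bound hq hw _ measurableSet_Iic u fun v hv => ?_
    have hv : v ≤ u := hv
    rw [abs_of_nonpos hu, abs_of_nonpos (hv.trans hu)]; linarith
  have hle1 : ∀ u : ℝ, (1 + |u|) ^ (-q) ≤ 1 := fun u =>
    Real.rpow_le_one_of_one_le_of_nonpos (by linarith [abs_nonneg u]) (by linarith)
  have hhφ : Integrable (h * φ) :=
    hφ.bdd_mul hcont.aestronglyMeasurable (Filter.Eventually.of_forall hM)
  have hi1 : IntegrableOn (h' * fun u => P u - a) (Set.Ioi 0) := by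
    rw [mul_comm]
    refine Integrable.bdd_mul (c := C) hi.integrableOn
      (by fun_prop) ?_
    refine (ae_restrict_iff' measurableSet_Ioi).2 (Filter.Eventually.of_forall fun v hv => ?_)
    exact (hv1 v (le_of_lt hv)).trans (mul_le_of_le_one_right hC0 (hle1 v))
  have hi2 : IntegrableOn (h' * fun u => P u + b) (Set.Iic 0) := by
    rw [mul_comm]
    refine Integrable.bdd_mul (c := C) hi.integrableOn
      (by fun_prop) ?_
    refine (ae_restrict_iff' measurableSet_Iic).2 (Filter.Eventually.of_forall fun v hv => ?_)
    exact (hv2 v hv).trans (mul_le_of_le_one_right hC0 (hle1 v))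
  have ht1 : Filter.Tendsto (fun u => P u - a) Filter.atTop (nhds 0) := by
    have := intervalIntegral_tendsto_integral_Ioi (0:ℝ) (hφ.integrableOn (s := Set.Ioi 0))
      Filter.tendsto_id
    simpa [P, ha] using this.sub_const a
  have ht2 : Filter.Tendsto (fun u => P u + b) Filter.atBot (nhds 0) := by
    have := intervalIntegral_tendsto_integral_Iic (0:ℝ) (hφ.integrableOn (s := Set.Iic 0))
      Filter.tendsto_id
    have h2 := (this.neg).add_const b
    simp only [id, ← intervalIntegral.integral_symm, ← hb, neg_add_cancel] at h2
    exact h2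
  have hbdd : ∀ l : Filter ℝ, Filter.IsBoundedUnder (· ≤ ·) l (norm ∘ h) := fun l =>
    Filter.isBoundedUnder_of ⟨M, hM⟩
  have e1 := integral_Ioi_mul_deriv_eq_deriv_mul (a := 0) (u := h) (v := fun u => P u - a)
    (u' := h') (v' := φ) (a' := h 0 * (P 0 - a)) (b' := 0)
    (fun x _ => hd x) (fun x _ => (hP x).sub_const a) hhφ.integrableOn hi1
    ((hcont.mul (hPc.sub continuous_const)).continuousAt.tendsto.mono_left nhdsWithin_le_nhds)
    (Filter.isBoundedUnder_le_mul_tendsto_zero (hbdd _) ht1)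
  have e2 := integral_Iic_mul_deriv_eq_deriv_mul (a := 0) (u := h) (v := fun u => P u + b)
    (u' := h') (v' := φ) (a' := h 0 * (P 0 + b)) (b' := 0)
    (fun x _ => hd x) (fun x _ => (hP x).add_const b) hhφ.integrableOn hi2
    ((hcont.mul (hPc.add continuous_const)).continuousAt.tendsto.mono_left nhdsWithin_le_nhds)
    (Filter.isBoundedUnder_le_mul_tendsto_zero (hbdd _) ht2)
  have e3 : (∫ v in Set.Iic 0, h v * φ v) + ∫ v in Set.Ioi 0, h v * φ v = 0 := by
    rw [← h0]
    exact intervalIntegral.integral_Iic_add_Ioi hhφ.integrableOn hhφ.integrableOn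
  rw [e1, e2, hP0] at e3
  have e4 : h 0 = (∫ x in Set.Iic 0, h' x * (P x + b)) + ∫ x in Set.Ioi 0, h' x * (P x - a) := by
    linear_combination (-h 0) * hab + e3
  have hwi : Integrable (fun u => C * ((1 + |u|) ^ (-q) * ‖h' u‖)) := by
    refine Integrable.const_mul ?_ C
    refine Integrable.bdd_mul (c := 1) hi.norm ?_ (Filter.Eventually.of_forall fun u => ?_)
    · apply Continuous.aestronglyMeasurable
      refine Continuous.rpow_const (by fun_prop) fun x => Or.inl ?_
      positivity
    · rw [Real.norm_of_nonneg (by positivity)]; exact hle1 u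
  rw [← integral_const_mul,
    ← intervalIntegral.integral_Iic_add_Ioi (b := 0) hwi.integrableOn hwi.integrableOn, e4]
  refine (norm_add_le _ _).trans (add_le_add ?_ ?_)
  · refine norm_integral_le_of_norm_le hwi.integrableOn ?_
    refine (ae_restrict_iff' measurableSet_Iic).2 (Filter.Eventually.of_forall fun v hv => ?_)
    rw [norm_mul, mul_comm, ← mul_assoc]
    exact mul_le_mul_of_nonneg_right (hv2 v hv) (norm_nonneg _)
  · refine norm_integral_le_of_norm_le hwi.integrableOn ?_
    refine (ae_restrict_iff' measurableSet_Ioi).2 (Filter.Eventually.of_forall fun v hv => ?_)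
    rw [norm_mul, mul_comm, ← mul_assoc]
    exact mul_le_mul_of_nonneg_right (hv1 v (le_of_lt hv)) (norm_nonneg _)

/-- A Schwartz function of integral one which is the Fourier transform of a function
supported in `(-1/(2π), 1/(2π))`. -/
lemma exists_kernel : ∃ ψ : SchwartzMap ℝ ℂ, (∀ x, (2 * π)⁻¹ ≤ |x| → ψ x = 0) ∧
    ∫ v, (FourierTransform.fourier ψ) v = 1 := by
  have hp : 0 < (2 * π)⁻¹ := by positivity
  let β : ContDiffBump (0:ℝ) := ⟨(2 * π)⁻¹ / 2, (2 * π)⁻¹, by positivity, by linarith⟩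
  have hs : HasCompactSupport (fun x => ((β x : ℝ) : ℂ)) :=
    β.hasCompactSupport.comp_left (g := fun r : ℝ => (r : ℂ)) (by simp)
  have hc : ContDiff ℝ (⊤ : ℕ∞) (fun x => ((β x : ℝ) : ℂ)) :=
    Complex.ofRealCLM.contDiff.comp β.contDiff
  refine ⟨hs.toSchwartzMap hc, fun x hx => ?_, ?_⟩
  · have : β x = 0 := β.zero_of_le_dist (by simpa [β] using hx)
    simp [this]
  · set ψ := hs.toSchwartzMap hc with hψ
    have h1 : FourierTransformInv.fourierInv (FourierTransform.fourier ψ) = ψ := by simp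
    have h2 := congrArg (fun g : SchwartzMap ℝ ℂ => g 0) h1
    simp only [SchwartzMap.fourierInv_coe, Real.fourierInv_eq] at h2
    have h3 : β 0 = 1 := β.one_of_mem_closedBall (by simp [β]; positivity)
    simpa [hψ, h3] using h2

/-- Integrability of the weighted derivative with the logarithmic factor. -/
lemma log_weight_integrable {q : ℝ} (hq : 0 < q) (g : SchwartzMap ℝ ℂ) (t lam : ℝ)
    (hl : 0 < lam) :
    Integrable (fun s : ℝ => (1 + |Real.log (lam * |t - s|)|) * (1 + lam * |t - s|) ^ (-q)
      * ‖g s‖) := by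
  obtain ⟨M, hM⟩ : ∃ M, ∀ x, ‖g x‖ ≤ M := by
    obtain ⟨M, hM⟩ := g.decay 0 0
    exact ⟨M, fun x => by simpa using hM.2 x⟩
  have hM0 : 0 ≤ M := (norm_nonneg _).trans (hM 0)
  have hlog : Integrable (Set.indicator (Set.Ioc (-1:ℝ) 1) fun u => |Real.log u|) := by
    rw [integrable_indicator_iff measurableSet_Ioc]
    have := (intervalIntegral.intervalIntegrable_log' (a := -1) (b := 1)).abs
    rwa [intervalIntegrable_iff_integrableOn_Ioc_of_le (by norm_num)] at this
  have hlog2 := ((hlog.comp_mul_left' hl.ne').comp_sub_left t).const_mul M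
  have h1 := schwartz_weight_integrable g 0
  have h2 := schwartz_weight_integrable g 1
  have h3 := (h2.const_mul (1 + lam * (1 + |t|)))
  refine (hlog2.add h3).mono' ?_ (Filter.Eventually.of_forall fun s => ?_)
  · have := g.continuous
    apply Measurable.aestronglyMeasurable
    fun_prop
  · have hx0 : 0 ≤ lam * |t - s| := by positivity
    have hle1 : (1 + lam * |t - s|) ^ (-q) ≤ 1 :=
      Real.rpow_le_one_of_one_le_of_nonpos (by linarith) (by linarith)
    rw [Real.norm_of_nonneg (by positivity)]
    have hts : |t - s| ≤ (1 + |t|) * (1 + |s|) := by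
      nlinarith [abs_sub t s, abs_nonneg t, abs_nonneg s]
    have hlx : Real.log (lam * |t - s|) = Real.log (lam * (t - s)) := by
      rw [← Real.log_abs (lam * (t - s)), abs_mul, abs_of_pos hl]
    have key : |Real.log (lam * |t - s|)| * ‖g s‖ ≤
        M * Set.indicator (Set.Ioc (-1:ℝ) 1) (fun u => |Real.log u|) (lam * (t - s))
          + lam * |t - s| * ‖g s‖ := by
      by_cases hm : lam * (t - s) ∈ Set.Ioc (-1:ℝ) 1
      · rw [Set.indicator_of_mem hm, hlx, mul_comm]
        have : |Real.log (lam * (t - s))| * 0 ≤ lam * |t - s| * ‖g s‖ := by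
          rw [mul_zero]; positivity
        nlinarith [mul_le_mul_of_nonneg_right (hM s) (abs_nonneg (Real.log (lam * (t - s))))]
      · rw [Set.indicator_of_notMem hm, mul_zero, zero_add]
        have h1x : 1 ≤ lam * |t - s| := by
          rw [show lam * |t - s| = |lam * (t - s)| by rw [abs_mul, abs_of_pos hl]]
          by_contra hlt
          have := abs_lt.1 (not_le.1 hlt)
          exact hm ⟨this.1, this.2.le⟩
        rw [abs_of_nonneg (Real.log_nonneg h1x)]
        exact mul_le_mul_of_nonneg_right (Real.log_le_self hx0) (norm_nonneg _)
    have h5 : (1 + |Real.log (lam * |t - s|)|) * (1 + lam * |t - s|) ^ (-q) * ‖g s‖ ≤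
        (1 + |Real.log (lam * |t - s|)|) * ‖g s‖ := by
      refine mul_le_mul_of_nonneg_right ?_ (norm_nonneg _)
      exact mul_le_of_le_one_right (by positivity) hle1
    refine h5.trans ?_
    simp only [Pi.add_apply, Real.rpow_one]
    have h6 : lam * |t - s| * ‖g s‖ ≤ lam * (1 + |t|) * ((1 + |s|) * ‖g s‖) := by
      calc lam * |t - s| * ‖g s‖ ≤ lam * ((1 + |t|) * (1 + |s|)) * ‖g s‖ := by gcongr
        _ = _ := by ring
    have h7 : ‖g s‖ ≤ (1 + |s|) * ‖g s‖ :=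
      le_mul_of_one_le_left (norm_nonneg _) (by linarith [abs_nonneg s])
    linarith

/-- The frequency condition kills the pairing with the kernel. -/
lemma pairing_zero {ψ f : SchwartzMap ℝ ℂ} {lam : ℝ} (hl : 0 < lam) (t : ℝ)
    (hψ : ∀ x, (2 * π)⁻¹ ≤ |x| → ψ x = 0)
    (hf : ∀ ω ∈ Set.Ioo (-lam) lam, fourierTf f ω = 0) :
    ∫ u, f (t - lam⁻¹ * u) * (FourierTransform.fourier ψ) u = 0 := by
  have hh : Integrable (fun u => f (t - lam⁻¹ * u)) :=
    (f.integrable.comp_sub_left t).comp_mul_left' (inv_ne_zero hl.ne')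
  have hflip := VectorFourier.integral_fourierIntegral_smul_eq_flip (L := innerₗ ℝ)
    Real.continuous_fourierChar continuous_inner ψ.integrable hh (μ := volume) (ν := volume)
  have hF : ∀ x, |x| < (2 * π)⁻¹ →
      FourierTransform.fourier (fun u => f (t - lam⁻¹ * u)) x = 0 := by
    intro x hx
    rw [Real.fourier_real_eq_integral_exp_smul]
    have h1 := hf (-(2 * π * x * lam)) (by
      have : |2 * π * x * lam| < lam := by
        rw [abs_mul, abs_mul, abs_of_pos hl, abs_of_pos Real.two_pi_pos]
        have : 2 * π * |x| < 1 := by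
          calc _ < 2 * π * (2 * π)⁻¹ := by gcongr
            _ = 1 := mul_inv_cancel₀ Real.two_pi_pos.ne'
        nlinarith
      have := abs_lt.1 this
      constructor <;> linarith)
    unfold fourierTf at h1
    have hpi : (((2 * π)⁻¹ : ℝ) : ℂ) ≠ 0 := by
      exact_mod_cast (inv_ne_zero Real.two_pi_pos.ne')
    have h2 := (mul_eq_zero.1 h1).resolve_left hpi
    let G : ℝ → ℂ := fun s => Complex.exp (((-2 * π * (lam * (t - s)) * x : ℝ) : ℂ) * Complex.I)
      * f s
    have h3 : ∫ s, G s = 0 := by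
      have : G = fun s => Complex.exp (((-2 * π * (lam * t) * x : ℝ) : ℂ) * Complex.I) *
          (f s * Complex.exp (-(Complex.I * (((-(2 * π * x * lam) : ℝ) : ℂ) * s)))) := by
        funext s
        simp only [G]
        rw [mul_left_comm (Complex.exp _) (f s), ← Complex.exp_add, mul_comm _ (f s)]
        congr 2
        push_cast
        ring
      rw [this, integral_const_mul, h2, mul_zero]
    have h4 := Measure.integral_comp_mul_left (fun y => G (t - y)) lam⁻¹
    rw [integral_sub_left_eq_self G volume t, h3, smul_zero] at h4
    rw [← h4]
    congr 1
    funext u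
    simp only [G, smul_eq_mul]
    congr 5
    field_simp
    ring
  have hz : ∀ x, ψ x • FourierTransform.fourier (fun u => f (t - lam⁻¹ * u)) x = 0 := by
    intro x
    by_cases hx : (2 * π)⁻¹ ≤ |x|
    · rw [hψ x hx, zero_smul]
    · rw [hF x (not_le.1 hx), smul_zero]
  calc _ = ∫ u, (FourierTransform.fourier (ψ : ℝ → ℂ)) u • f (t - lam⁻¹ * u) := by
        simp only [SchwartzMap.fourier_coe, smul_eq_mul, mul_comm]
    _ = ∫ x, ψ x • FourierTransform.fourier (fun u => f (t - lam⁻¹ * u)) x := by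
        simpa using! hflip
    _ = 0 := by simp only [hz, integral_zero]

/-- For every `q > 0` there is `B > 0` (depending only on `q`) such that: for every `λ > 0`
and every Schwartz function `f` with `f̂` vanishing on `(-λ, λ)`, for every `t ∈ ℝ`,
`|f(t)| ≤ B ∫_ℝ (1 + |log(λ|t−s|)|) (1 + λ|t−s|)^{-q} |f'(s)| ds`. -/
theorem pointwise_bound_of_high_frequency (q : ℝ) (hq : 0 < q) :
    ∃ B : ℝ, 0 < B ∧ ∀ lam : ℝ, 0 < lam → ∀ f : SchwartzMap ℝ ℂ,
      (∀ ω ∈ Set.Ioo (-lam) lam, fourierTf f ω = 0) →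
      ∀ t : ℝ,
        ‖f t‖ ≤ B * ∫ s : ℝ,
          (1 + |Real.log (lam * |t - s|)|) * (1 + lam * |t - s|) ^ (-q) * ‖deriv (⇑f) s‖ := by
  obtain ⟨ψ, hψ, hψ1⟩ := exists_kernel
  set φ : SchwartzMap ℝ ℂ := FourierTransform.fourier ψ with hφ
  have hw := schwartz_weight_integrable φ q
  set C := ∫ v, (1 + |v|) ^ q * ‖φ v‖ with hC
  have hC0 : 0 ≤ C := integral_nonneg fun v => by positivity
  refine ⟨C + 1, by linarith, fun lam hl f hf t => ?_⟩
  let g : SchwartzMap ℝ ℂ := SchwartzMap.derivCLM ℂ ℂ f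
  have hg : ∀ x, deriv f x = g x := fun x => by simp [g]
  obtain ⟨M, hM⟩ : ∃ M, ∀ x, ‖f x‖ ≤ M := by
    obtain ⟨M, hM⟩ := f.decay 0 0
    exact ⟨M, fun x => by simpa using hM.2 x⟩
  have hd : ∀ u, HasDerivAt (fun u => f (t - lam⁻¹ * u)) (-(lam⁻¹ : ℂ) * g (t - lam⁻¹ * u)) u := by
    intro u
    have h1 : HasDerivAt f (g (t - lam⁻¹ * u)) (t - lam⁻¹ * u) := by
      rw [← hg]; exact f.differentiableAt.hasDerivAt
    have h2 : HasDerivAt (fun u : ℝ => t - lam⁻¹ * u) (-lam⁻¹) u := by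
      simpa using ((hasDerivAt_id u).const_mul lam⁻¹).const_sub t
    have := h1.scomp u h2
    simpa [Function.comp_def] using this
  have hgi : Integrable (fun u => -(lam⁻¹ : ℂ) * g (t - lam⁻¹ * u)) :=
    ((g.integrable.comp_sub_left t).comp_mul_left' (inv_ne_zero hl.ne')).const_mul _
  have hcore := core_bound hq φ.continuous φ.integrable hψ1 hw hd (fun x => hM _) hgi
    (pairing_zero hl t hψ hf)
  rw [← hC] at hcore
  simp only [mul_zero, sub_zero] at hcore
  have hint := log_weight_integrable hq g t lam hl
  simp only [hg]
  have hsub : ∫ u : ℝ, (1 + |u|) ^ (-q) * ‖-(lam⁻¹ : ℂ) * g (t - lam⁻¹ * u)‖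
      = ∫ s, (1 + lam * |t - s|) ^ (-q) * ‖g s‖ := by
    have h4 := Measure.integral_comp_mul_left
      (fun y => (fun s => (1 + lam * |t - s|) ^ (-q) * ‖g s‖) (t - y)) lam⁻¹
    rw [integral_sub_left_eq_self (fun s => (1 + lam * |t - s|) ^ (-q) * ‖g s‖) volume t,
      inv_inv, abs_of_pos hl, smul_eq_mul] at h4
    have h5 : ∀ u : ℝ, (1 + |u|) ^ (-q) * ‖-(lam⁻¹ : ℂ) * g (t - lam⁻¹ * u)‖ = lam⁻¹ *
        ((1 + lam * |t - (t - lam⁻¹ * u)|) ^ (-q) * ‖g (t - lam⁻¹ * u)‖) := by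
      intro u
      rw [sub_sub_cancel, abs_mul, abs_of_pos (inv_pos.2 hl), mul_inv_cancel_left₀ hl.ne',
        norm_mul, norm_neg, norm_inv, Complex.norm_real, Real.norm_of_nonneg hl.le]
      ring
    simp only [h5]
    rw [integral_const_mul, h4, inv_mul_cancel_left₀ hl.ne']
  rw [hsub] at hcore
  refine hcore.trans (mul_le_mul (by linarith) ?_ (integral_nonneg fun s => by positivity)
    (by linarith))
  refine integral_mono_of_nonneg (Filter.Eventually.of_forall fun s => by positivity) hint
    (Filter.Eventually.of_forall fun s => ?_)
  refine mul_le_mul_of_nonneg_right ?_ (norm_nonneg _)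
  exact le_mul_of_one_le_left (by positivity)
    (by linarith [abs_nonneg (Real.log (lam * |t - s|))])
end

section
/- For every real q > 1 there exists a constant B > 0, depending only on ζ and q, such that for every λ > 0, every continuous compactly supported f : ℝ → ℂ, and every τ̃ ∈ ℝ, ∫_{τ̃}^{τ̃+1} |(K_λ ∗ f)(t)|² dt ≤ B Σ_{ℓ ∈ ℤ} (1+|ℓ|)^{-q} ∫_{τ̃+ℓ/λ}^{τ̃+1+(ℓ+1)/λ} |f(s)|² ds. -/
open MeasureTheory Real

open scoped FourierTransform
lemma kernel_decay (ζ : ℝ → ℝ) (hζ_smooth : ContDiff ℝ (⊤ : ℕ∞) ζ)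
    (hζ_supp : Function.support ζ ⊆ Set.Icc (-2) 2) (q : ℝ) :
    ∃ C : ℝ, 0 < C ∧ ∀ x : ℝ, ‖lowPassKernel ζ 1 x‖ ≤ C * (1 + |x|) ^ (-q) := by
  have h1 : HasCompactSupport (fun x => (ζ x : ℂ)) := by
    apply HasCompactSupport.of_support_subset_isCompact (K := Set.Icc (-2) 2) isCompact_Icc
    intro x hx
    apply hζ_supp
    simpa using hx
  have h2 : ContDiff ℝ (⊤ : ℕ∞) (fun x => (ζ x : ℂ)) := Complex.ofRealCLM.contDiff.comp hζ_smooth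
  set S := 𝓕 (h1.toSchwartzMap h2) with hS
  obtain ⟨N, hN⟩ := exists_nat_ge q
  set M := 2 ^ N * (Finset.Iic (N, 0)).sup (fun m => SchwartzMap.seminorm ℝ m.1 m.2) S with hM
  have hb : ∀ x : ℝ, (1 + |x|) ^ N * ‖S x‖ ≤ M := by
    intro x
    have := SchwartzMap.one_add_le_sup_seminorm_apply (𝕜 := ℝ) (m := (N, 0)) (k := N) (n := 0)
      le_rfl le_rfl S x
    simpa using this
  have hM0 : 0 ≤ M := le_trans (by positivity) (hb 0)
  have hk : ∀ x : ℝ, lowPassKernel ζ 1 x = ((2 * Real.pi)⁻¹ : ℝ) * S (-(x / (2 * π))) := by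
    intro x
    rw [hS, SchwartzMap.fourier_coe, Real.fourier_real_eq_integral_exp_smul, lowPassKernel]
    simp only [mul_one]
    congr 1
    apply integral_congr_ae
    filter_upwards with v
    have : ((-2 * π * v * (-(x / (2 * π))) : ℝ) : ℂ) * Complex.I = Complex.I * ((1:ℝ) * v * x) := by
      have : (-2 * π * v * (-(x / (2 * π))) : ℝ) = v * x := by
        field_simp
      rw [this]; push_cast; ring
    rw [this, smul_eq_mul, mul_comm]
    rfl
  refine ⟨(2 * π) ^ N * (M + 1), by positivity, fun x => ?_⟩
  rw [hk, norm_mul, Complex.norm_real, Real.norm_of_nonneg (by positivity)]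
  have hpi : (1:ℝ) ≤ 2 * π := by linarith [Real.pi_gt_three]
  have e1 := hb (-(x / (2 * π)))
  rw [abs_neg, abs_div, abs_of_pos (show (0:ℝ) < 2 * π by positivity)] at e1
  have e2 : (1 + |x|) ≤ (2 * π) * (1 + |x| / (2 * π)) := by
    field_simp
    linarith
  have e3 : (1 + |x|) ^ q ≤ (2 * π) ^ N * (1 + |x| / (2 * π)) ^ N := by
    calc (1 + |x|) ^ q ≤ (1 + |x|) ^ (N : ℝ) :=
          Real.rpow_le_rpow_of_exponent_le (by linarith [abs_nonneg x]) hN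
      _ = (1 + |x|) ^ N := Real.rpow_natCast _ _
      _ ≤ ((2 * π) * (1 + |x| / (2 * π))) ^ N := by gcongr
      _ = _ := mul_pow _ _ _
  have e4 : (2 * π)⁻¹ * ‖S (-(x / (2 * π)))‖ ≤ ‖S (-(x / (2 * π)))‖ :=
    mul_le_of_le_one_left (norm_nonneg _) (inv_le_one_of_one_le₀ hpi)
  refine e4.trans ?_
  have hp : 0 < (1 + |x|) ^ q := by positivity
  rw [Real.rpow_neg (by positivity), ← div_eq_mul_inv, le_div_iff₀ hp]
  calc _ ≤ ‖S (-(x / (2 * π)))‖ * ((2 * π) ^ N * (1 + |x| / (2 * π)) ^ N) := by gcongr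
    _ = (2 * π) ^ N * ((1 + |x| / (2 * π)) ^ N * ‖S (-(x / (2 * π)))‖) := by ring
    _ ≤ (2 * π) ^ N * (M + 1) := by gcongr; linarith

lemma filter_scale (ζ : ℝ → ℝ) (lam : ℝ) (hl : 0 < lam) (f : ℝ → ℂ) (t : ℝ) :
    lowPassFilter ζ lam f t = ∫ v : ℝ, lowPassKernel ζ 1 (-v) * f (t + v / lam) := by
  unfold lowPassFilter
  rw [← integral_add_left_eq_self _ t]
  have h := Measure.integral_comp_div (fun u => lowPassKernel ζ lam (t - (t + u)) * f (t + u)) lam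
  rw [abs_of_pos hl] at h
  have hl' : (lam : ℂ) ≠ 0 := by exact_mod_cast hl.ne'
  have h2 : (∫ u, lowPassKernel ζ lam (t - (t + u)) * f (t + u)) =
      lam⁻¹ • ∫ v, lowPassKernel ζ lam (t - (t + v / lam)) * f (t + v / lam) := by
    rw [h, smul_smul, inv_mul_cancel₀ hl.ne', one_smul]
  rw [h2, ← integral_smul]
  congr 1
  ext v
  unfold lowPassKernel
  have : ∀ ω : ℝ, Complex.I * (lam * ω * ((t - (t + v / lam) : ℝ) : ℂ))
      = Complex.I * ((1:ℝ) * ω * ((-v : ℝ) : ℂ)) := by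
    intro ω
    push_cast
    field_simp
    ring
  simp_rw [this]
  rw [Complex.real_smul]
  generalize (∫ ω : ℝ, (ζ ω : ℂ) * Complex.exp (Complex.I * ((1:ℝ) * ω * ((-v : ℝ) : ℂ)))) = I
  generalize f (t + v / lam) = z
  push_cast
  field_simp

lemma cauchy (h u : ℝ → ENNReal) (hh : Measurable h) (hu : Measurable u) :
    (∫⁻ v, h v * u v) ^ 2 ≤ (∫⁻ v, h v) * ∫⁻ v, h v * u v ^ 2 := by
  have := ENNReal.lintegral_mul_norm_pow_le (μ := volume) (f := h) (g := fun v => h v * u v ^ 2)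
    hh.aemeasurable (hh.mul (hu.pow_const 2)).aemeasurable (p := 1/2) (q := 1/2)
    (by norm_num) (by norm_num) (by norm_num)
  have e : ∀ v, h v ^ (1/2:ℝ) * (h v * u v ^ 2) ^ (1/2 : ℝ) = h v * u v := by
    intro v
    rw [ENNReal.mul_rpow_of_nonneg _ _ (by norm_num), ← mul_assoc,
      ← ENNReal.rpow_add_of_nonneg _ _ (by norm_num) (by norm_num), ← ENNReal.rpow_natCast,
      ← ENNReal.rpow_mul]
    norm_num
  simp_rw [e] at this
  calc _ ≤ ((∫⁻ v, h v) ^ (1/2:ℝ) * (∫⁻ v, h v * u v ^ 2) ^ (1/2:ℝ)) ^ 2 := by gcongr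
    _ = _ := by
      rw [← ENNReal.mul_rpow_of_nonneg _ _ (by norm_num), ← ENNReal.rpow_natCast,
      ← ENNReal.rpow_mul]
      norm_num

lemma summable_w (q : ℝ) (hq : 1 < q) : Summable (fun l : ℤ => (1 + |(l:ℝ)|) ^ (-q)) := by
  refine Summable.of_norm_bounded_eventually (Real.summable_abs_int_rpow hq) ?_
  have : ({0}ᶜ : Set ℤ) ∈ Filter.cofinite :=
    (Set.finite_singleton 0).compl_mem_cofinite
  filter_upwards [this] with l hl
  have : (0:ℝ) < |(l:ℝ)| := by
    rw [abs_pos]; exact_mod_cast hl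
  rw [Real.norm_of_nonneg (by positivity)]
  exact Real.rpow_le_rpow_of_nonpos this (by linarith) (by linarith)

lemma weight_floor (q : ℝ) (hq : 1 < q) (l : ℤ) (v : ℝ) (hv : v ∈ Set.Ico (l:ℝ) (l+1)) :
    (1 + |v|) ^ (-q) ≤ 2 ^ q * (1 + |(l:ℝ)|) ^ (-q) := by
  have h1 : (1 + |(l:ℝ)|) / 2 ≤ 1 + |v| := by
    have : |(l:ℝ)| ≤ |v| + |l - v| := by
      have := abs_add_le v (l - v); simpa using this
    have : |l - v| ≤ 1 := by rw [abs_le]; constructor <;> linarith [hv.1, hv.2]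
    linarith [abs_nonneg v]
  calc _ ≤ ((1 + |(l:ℝ)|) / 2) ^ (-q) :=
        Real.rpow_le_rpow_of_nonpos (by positivity) h1 (by linarith)
    _ = _ := by
      rw [Real.div_rpow (by positivity) (by norm_num), Real.rpow_neg (by norm_num : (0:ℝ) ≤ 2)]
      field_simp

lemma cell_sum (C q : ℝ) (hC : 0 < C) (hq : 1 < q) (G : ℝ → ENNReal) (J : ℤ → ENNReal)
    (hG : ∀ l : ℤ, ∀ v ∈ Set.Ico (l:ℝ) (l+1), G v ≤ J l) :
    ∫⁻ v, ENNReal.ofReal (C * (1 + |v|) ^ (-q)) * G v ≤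
      ∑' l : ℤ, ENNReal.ofReal (C * 2 ^ q * (1 + |(l:ℝ)|) ^ (-q)) * J l := by
  rw [← setLIntegral_univ, ← iUnion_Ico_intCast ℝ,
    lintegral_iUnion (fun i => measurableSet_Ico) (Set.pairwise_disjoint_Ico_intCast ℝ)]
  refine ENNReal.tsum_le_tsum fun l => ?_
  calc _ ≤ ∫⁻ v in Set.Ico (l:ℝ) (l+1),
        ENNReal.ofReal (C * 2 ^ q * (1 + |(l:ℝ)|) ^ (-q)) * J l := by
        refine setLIntegral_mono' measurableSet_Ico fun v hv => ?_
        refine mul_le_mul' (ENNReal.ofReal_le_ofReal ?_) (hG l v hv)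
        rw [mul_assoc]
        exact mul_le_mul_of_nonneg_left (weight_floor q hq l v hv) hC.le
    _ = _ := by
      rw [setLIntegral_const, Real.volume_Ico]
      simp

/-- For every `q > 1` there is `B > 0` (depending only on `ζ` and `q`) such that for every
`λ > 0`, every continuous compactly supported `f : ℝ → ℂ`, and every `τ̃ ∈ ℝ`,
`∫_{τ̃}^{τ̃+1} |(K_λ ∗ f)(t)|² dt ≤ B Σ_{ℓ ∈ ℤ} (1+|ℓ|)^{-q} ∫_{τ̃+ℓ/λ}^{τ̃+1+(ℓ+1)/λ} |f(s)|² ds`. -/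
theorem window_L2_bound_lowPassFilter
    (ζ : ℝ → ℝ) (hζ_smooth : ContDiff ℝ (⊤ : ℕ∞) ζ) (hζ_even : ∀ x, ζ (-x) = ζ x)
    (hζ_supp : Function.support ζ ⊆ Set.Icc (-2) 2)
    (hζ_one : ∀ x ∈ Set.Icc (-1 : ℝ) 1, ζ x = 1)
    (q : ℝ) (hq : 1 < q) :
    ∃ B : ℝ, 0 < B ∧ ∀ lam : ℝ, 0 < lam → ∀ f : ℝ → ℂ,
      Continuous f → HasCompactSupport f → ∀ τ : ℝ,
        (∫ t in τ..(τ + 1), ‖lowPassFilter ζ lam f t‖ ^ 2) ≤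
          B * ∑' ℓ : ℤ,
            (1 + |(ℓ : ℝ)|) ^ (-q) *
              ∫ s in (τ + (ℓ : ℝ) / lam)..(τ + 1 + ((ℓ : ℝ) + 1) / lam), ‖f s‖ ^ 2 := by
  obtain ⟨C, hC, hdec⟩ := kernel_decay ζ hζ_smooth hζ_supp q
  have hw := summable_w q hq
  set W := ∑' l : ℤ, (1 + |(l:ℝ)|) ^ (-q) with hW
  have hWpos : 0 < W := hw.tsum_pos (fun l => by positivity) 0 (by simp)
  refine ⟨(C * 2 ^ q * W) * (C * 2 ^ q), by positivity, fun lam hl f hf hfc τ => ?_⟩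
  set J : ℤ → ℝ := fun l => ∫ s in (τ + (l : ℝ) / lam)..(τ + 1 + ((l : ℝ) + 1) / lam), ‖f s‖ ^ 2
    with hJ
  have hf2 : Continuous (fun s => ‖f s‖ ^ 2) := by fun_prop
  have hf2c : HasCompactSupport (fun s => ‖f s‖ ^ 2) := by
    have := hfc.norm
    exact this.comp_left (g := fun x : ℝ => x ^ 2) (by simp)
  have hfi : Integrable (fun s => ‖f s‖ ^ 2) := hf2.integrable_of_hasCompactSupport hf2c
  have hle : ∀ l : ℤ, τ + (l : ℝ) / lam ≤ τ + 1 + ((l : ℝ) + 1) / lam := by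
    intro l
    have : (l : ℝ) / lam ≤ ((l : ℝ) + 1) / lam := by gcongr; linarith
    linarith
  have hJ0 : ∀ l, 0 ≤ J l := fun l =>
    intervalIntegral.integral_nonneg (hle l) (fun _ _ => by positivity)
  have hJle : ∀ l, J l ≤ ∫ s, ‖f s‖ ^ 2 := by
    intro l
    simp only [hJ]
    rw [intervalIntegral.integral_of_le (hle l)]
    exact setIntegral_le_integral hfi (Filter.Eventually.of_forall fun _ => by positivity)
  have hsum : Summable (fun l : ℤ => (1 + |(l:ℝ)|) ^ (-q) * J l) := by
    refine Summable.of_nonneg_of_le (fun l => mul_nonneg (by positivity) (hJ0 l)) (fun l => ?_)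
      (hw.mul_right (∫ s, ‖f s‖ ^ 2))
    exact mul_le_mul_of_nonneg_left (hJle l) (by positivity)
  have hJe : ∀ l, ENNReal.ofReal (J l) =
      ∫⁻ s in Set.Ioc (τ + (l : ℝ) / lam) (τ + 1 + ((l : ℝ) + 1) / lam), ‖f s‖ₑ ^ 2 := by
    intro l
    simp only [hJ]
    rw [intervalIntegral.integral_of_le (hle l), ofReal_integral_eq_lintegral_ofReal
      hfi.integrableOn (Filter.Eventually.of_forall fun _ => by positivity)]
    congr 1
    ext s
    rw [ENNReal.ofReal_pow (norm_nonneg _), ofReal_norm]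
  set h : ℝ → ENNReal := fun v => ENNReal.ofReal (C * (1 + |v|) ^ (-q)) with hh
  have hm : Measurable h := by fun_prop
  have hA : ∫⁻ v, h v ≤ ENNReal.ofReal (C * 2 ^ q * W) := by
    have := cell_sum C q hC hq (fun _ => 1) (fun _ => 1) (fun _ _ _ => le_rfl)
    simp only [mul_one] at this
    refine this.trans ?_
    rw [← ENNReal.ofReal_tsum_of_nonneg (fun l => by positivity) (hw.mul_left _), tsum_mul_left]
  have hpt : ∀ t, ‖lowPassFilter ζ lam f t‖ₑ ^ 2 ≤
      ENNReal.ofReal (C * 2 ^ q * W) * ∫⁻ v, h v * ‖f (t + v / lam)‖ₑ ^ 2 := by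
    intro t
    have hfm : Measurable (fun v => ‖f (t + v / lam)‖ₑ) :=
      (hf.comp (by fun_prop : Continuous fun v : ℝ => t + v / lam)).enorm.measurable
    calc ‖lowPassFilter ζ lam f t‖ₑ ^ 2 ≤ (∫⁻ v, h v * ‖f (t + v / lam)‖ₑ) ^ 2 := by
          gcongr
          rw [filter_scale ζ lam hl]
          refine (enorm_integral_le_lintegral_enorm _).trans (lintegral_mono fun v => ?_)
          simp only [enorm_mul]
          gcongr
          rw [← ofReal_norm]
          refine ENNReal.ofReal_le_ofReal ?_
          simpa using hdec (-v)
      _ ≤ _ := cauchy h _ hm hfm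
      _ ≤ _ := by gcongr
  have hmain : ∫⁻ t in Set.Ioc τ (τ + 1), ‖lowPassFilter ζ lam f t‖ₑ ^ 2 ≤
      ENNReal.ofReal ((C * 2 ^ q * W) * (C * 2 ^ q) * ∑' l : ℤ, (1 + |(l:ℝ)|) ^ (-q) * J l) := by
    have hcont : Continuous (fun p : ℝ × ℝ => ‖f (p.1 + p.2 / lam)‖ₑ ^ 2) := by
      have : Continuous (fun p : ℝ × ℝ => ‖f (p.1 + p.2 / lam)‖ₑ) :=
        (hf.comp (by fun_prop : Continuous fun p : ℝ × ℝ => p.1 + p.2 / lam)).enorm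
      exact (ENNReal.continuous_pow 2).comp this
    calc _ ≤ ∫⁻ t in Set.Ioc τ (τ + 1),
          ENNReal.ofReal (C * 2 ^ q * W) * ∫⁻ v, h v * ‖f (t + v / lam)‖ₑ ^ 2 :=
          lintegral_mono hpt
      _ = ENNReal.ofReal (C * 2 ^ q * W) * ∫⁻ t in Set.Ioc τ (τ + 1),
            ∫⁻ v, h v * ‖f (t + v / lam)‖ₑ ^ 2 :=
          lintegral_const_mul' _ _ ENNReal.ofReal_ne_top
      _ = ENNReal.ofReal (C * 2 ^ q * W) * ∫⁻ v, h v *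
            ∫⁻ t in Set.Ioc τ (τ + 1), ‖f (t + v / lam)‖ₑ ^ 2 := by
          rw [lintegral_lintegral_swap]
          · congr 1
            refine lintegral_congr fun v => ?_
            exact lintegral_const_mul' _ _ ENNReal.ofReal_ne_top
          · exact ((hm.comp measurable_snd).mul hcont.measurable).aemeasurable
      _ ≤ ENNReal.ofReal (C * 2 ^ q * W) *
            ∑' l : ℤ, ENNReal.ofReal (C * 2 ^ q * (1 + |(l:ℝ)|) ^ (-q)) * ENNReal.ofReal (J l) := by
          gcongr
          refine cell_sum C q hC hq _ _ fun l v hv => ?_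
          rw [hJe]
          have e : ∫⁻ t in Set.Ioc τ (τ + 1), ‖f (t + v / lam)‖ₑ ^ 2 =
              ∫⁻ s in Set.Ioc (τ + v / lam) (τ + 1 + v / lam), ‖f s‖ₑ ^ 2 := by
            rw [← lintegral_indicator measurableSet_Ioc, ← lintegral_indicator measurableSet_Ioc,
              ← lintegral_add_right_eq_self ((Set.Ioc (τ + v / lam) (τ + 1 + v / lam)).indicator
                fun s => ‖f s‖ₑ ^ 2) (v / lam)]
            congr 1
            ext t
            simp [Set.indicator, Set.mem_Ioc]
          rw [e]
          refine lintegral_mono_set (Set.Ioc_subset_Ioc ?_ ?_)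
          · have : (l:ℝ) / lam ≤ v / lam := by gcongr; exact hv.1
            linarith
          · have : v / lam ≤ ((l:ℝ) + 1) / lam := by gcongr; exact hv.2.le
            linarith
      _ = _ := by
          have : ∀ l : ℤ, ENNReal.ofReal (C * 2 ^ q * (1 + |(l:ℝ)|) ^ (-q)) * ENNReal.ofReal (J l)
              = ENNReal.ofReal (C * 2 ^ q * ((1 + |(l:ℝ)|) ^ (-q) * J l)) := by
            intro l
            rw [← ENNReal.ofReal_mul (by positivity), mul_assoc]
          simp_rw [this]
          rw [← ENNReal.ofReal_tsum_of_nonneg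
            (fun l => mul_nonneg (by positivity) (mul_nonneg (by positivity) (hJ0 l)))
            (hsum.mul_left _), tsum_mul_left, ← ENNReal.ofReal_mul (by positivity),
            ← mul_assoc (C * 2 ^ q * W)]
  have hS0 : 0 ≤ (C * 2 ^ q * W) * (C * 2 ^ q) * ∑' l : ℤ, (1 + |(l:ℝ)|) ^ (-q) * J l :=
    mul_nonneg (by positivity) (tsum_nonneg fun l => mul_nonneg (by positivity) (hJ0 l))
  rw [intervalIntegral.integral_of_le (by linarith)]
  refine (le_abs_self _).trans ?_
  rw [← Real.norm_eq_abs]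
  refine (norm_integral_le_lintegral_norm _).trans ?_
  refine ENNReal.toReal_le_of_le_ofReal hS0 ?_
  refine le_trans (le_of_eq ?_) hmain
  congr 1
  ext t
  rw [norm_pow, norm_norm, ENNReal.ofReal_pow (norm_nonneg _), ofReal_norm]
end
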